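/- Fix a prime power q and ε ∈ (0,1/2). There exist constants c, C > 0 (depending only on q and ε) such that for every δ > 0 there is an integer N with the following property: for all integers n ≥ N and all integers m with (1+ε)·(log n)/(log q) ≤ m ≤ (2−ε)·(log n)/(log q), one has (1−δ)·G_q(x)·exp( −C·n³/(m·q^{2m}) ) ≤ p_{n,m,q}/p_{n,m} ≤ (1+δ)·G_q(x)·exp( −c·n³/(m·q^{2m}) ). -/

import Mathlib

open Real

noncomputable section

/-- Predicate characterizing the Dickman function `ρ : [0,∞) → (0,∞)`:
continuous on `[0,∞)`, positive, equal to `1` on `[0,1]`, and satisfying the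
delay differential equation `t·ρ'(t) + ρ(t-1) = 0` for `t > 1`. -/
def IsDickman (ρ : ℝ → ℝ) : Prop :=
  ContinuousOn ρ (Set.Ici 0) ∧
  (∀ t : ℝ, 0 ≤ t → 0 < ρ t) ∧
  (∀ t ∈ Set.Icc (0:ℝ) 1, ρ t = 1) ∧
  (∀ t : ℝ, 1 < t → HasDerivAt ρ (-(ρ (t - 1)) / t) t)

/-- `ξ(u)`: for `u > 1`, the unique positive solution of `e^ξ = 1 + u·ξ`; otherwise `0`. -/
def xi (u : ℝ) : ℝ :=
  open Classical in
  if h : ∃ x : ℝ, 0 < x ∧ Real.exp x = 1 + u * x then h.choose else 0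

/-- `p_{n,m}`: probability that a uniformly random permutation of `{1,…,n}` is `m`-friable,
i.e. has no cycle of length greater than `m`. -/
def permProb (n m : ℕ) : ℝ :=
  (Nat.card {σ : Equiv.Perm (Fin n) // ∀ c ∈ σ.cycleType, c ≤ m} : ℝ) /
    (Nat.factorial n : ℝ)

/-- `p_{n,m,q}`: proportion of monic polynomials of degree `n` over a finite field `F`
(of cardinality `q`) that are `m`-friable, i.e. all of whose monic irreducible factors
have degree at most `m`. -/
def polyProb (F : Type) [Field F] [Fintype F] (n m : ℕ) : ℝ :=
  (Nat.card {f : Polynomial F // f.Monic ∧ f.natDegree = n ∧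
      ∀ p : Polynomial F, p.Monic → Irreducible p → p ∣ f → p.natDegree ≤ m} : ℝ) /
    (Fintype.card F : ℝ) ^ n

/-- `F_q(z) = ∏_{deg P ≤ m} (1 - (z/q)^{deg P})⁻¹`, the product over monic irreducible
polynomials `P` over `F` of degree at most `m`. -/
def FqFun (F : Type) [Field F] [Fintype F] (m : ℕ) (z : ℝ) : ℝ :=
  ∏ᶠ p ∈ {p : Polynomial F | p.Monic ∧ Irreducible p ∧ p.natDegree ≤ m},
    (1 - (z / (Fintype.card F : ℝ)) ^ p.natDegree)⁻¹

/-- `G_q(z) = F_q(z) · exp(-∑_{i=1}^m z^i/i)`. -/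
def Gq (F : Type) [Field F] [Fintype F] (m : ℕ) (z : ℝ) : ℝ :=
  FqFun F m z * Real.exp (-(∑ i ∈ Finset.Icc 1 m, z ^ i / (i : ℝ)))

/-- The coefficients `d_{m,i}`. -/
def dcoef (m i : ℕ) : ℝ :=
  if i = m then -(1 / (m : ℝ)) * ∑ j ∈ Finset.Icc 2 m, (1 : ℝ) / (j : ℝ)
  else Real.Gamma ((i : ℝ) + (i : ℝ) / (m : ℝ)) /
    (((m : ℝ) - (i : ℝ)) * (Nat.factorial i : ℝ) * Real.Gamma (1 + (i : ℝ) / (m : ℝ)))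

/-- `T(s) = ∫₀^s ((e^t - 1)/t)·((t/m)/(1 - e^{-t/m}) - 1) dt`, integrand extended by `0` at `t = 0`. -/
def Tfun (m : ℕ) (s : ℝ) : ℝ :=
  ∫ t in (0:ℝ)..s,
    if t = 0 then 0 else
      ((Real.exp t - 1) / t) * ((t / (m : ℝ)) / (1 - Real.exp (-t / (m : ℝ))) - 1)

end

/-!
Counting friable permutations by cycle type, and friable polynomials by factorization type, shows
that both generating functions are exponentials, and that `Gq F m` is their quotient (after
`z ↦ z / q`). Hence `polyProb F n m = ∑ g_k * permProb (n - k) m`, where `g_k ≥ 0` are the Taylor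
coefficients of `Gq F m`, and the theorem measures how far the ratio is from `∑ g_k * x ^ k`.

The sequence `n ↦ permProb n m` is log-concave, and the ratio `r` of consecutive terms at index `n`
satisfies `n ≤ r + r ^ 2 + ⋯ + r ^ m ≤ n + m`, so `r` is close to the saddle point `x` of `n`. Put
`M = n ^ 2 / q ^ m`, which is the order of magnitude of the contributing `k` and of the derivative
of `log (Gq F m)` with respect to `log x`.

* Upper bound: Rankin's trick with the ratio `y` at an index `t ≍ M` below `n`. Since `y < x`, the
  term `j = 2 * m` of `log (Gq F m)` alone gains a factor `exp (-2 * E)`, where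
  `E ≍ n ^ 3 / (m * q ^ (2 * m))`, while moving from `n - t` to `n` costs at most `exp E`.
* Lower bound: the terms with `k ≤ K ≍ M` carry almost all of `Gq F m x`, and for these
  `permProb (n - k) m / permProb n m` is at least `x ^ k * exp (-4 * K ^ 2 / (n * m))`.
-/

/-! ### Coefficients of the exponential of a power series -/

section ExpSeq

open PowerSeries
open Finset.HasAntidiagonal (antidiagonal mem_antidiagonal)

/-- `c` is the coefficient sequence of `exp (∑ i ≥ 1, l i * z ^ i / i)`, encoded by the recurrence
that the logarithmic derivative imposes. The recurrence at `n = 0` forces `l 0 = 0`. -/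
def IsExpSeq (l c : ℕ → ℝ) : Prop :=
  c 0 = 1 ∧ ∀ n : ℕ, (n : ℝ) * c n = ∑ ij ∈ antidiagonal n, l ij.1 * c ij.2

lemma IsExpSeq.log_zero {l c : ℕ → ℝ} (h : IsExpSeq l c) : l 0 = 0 := by
  simpa [h.1] using (h.2 0).symm

lemma IsExpSeq.unique {l c d : ℕ → ℝ} (hc : IsExpSeq l c) (hd : IsExpSeq l d) : c = d := by
  funext n
  induction n using Nat.strong_induction_on with
  | _ n ih =>
    obtain rfl | hn := n.eq_zero_or_pos
    · rw [hc.1, hd.1]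
    · refine mul_left_cancel₀ (Nat.cast_ne_zero.2 hn.ne' : (n : ℝ) ≠ 0) ?_
      rw [hc.2 n, hd.2 n]
      refine Finset.sum_congr rfl fun ij hij => ?_
      rw [mem_antidiagonal] at hij
      obtain h0 | h0 := ij.1.eq_zero_or_pos
      · rw [h0, hc.log_zero, zero_mul, zero_mul]
      · rw [ih ij.2 (by omega)]

lemma isExpSeq_iff_derivative {l c : ℕ → ℝ} :
    IsExpSeq l c ↔ c 0 = 1 ∧ X * PowerSeries.derivative ℝ (mk c) = mk l * mk c := by
  rw [IsExpSeq, PowerSeries.ext_iff]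
  refine and_congr_right fun _ => forall_congr' fun n => ?_
  rw [coeff_mul n (mk l)]
  obtain _ | n := n
  · simp
  · simp only [coeff_succ_X_mul, coeff_derivative, coeff_mk, Nat.cast_succ, mul_comm]

lemma IsExpSeq.mul {l c l' c' : ℕ → ℝ} (h : IsExpSeq l c) (h' : IsExpSeq l' c') :
    IsExpSeq (fun n => l n + l' n) (fun n => ∑ ij ∈ antidiagonal n, c ij.1 * c' ij.2) := by
  have mk_conv : mk (fun n => ∑ ij ∈ antidiagonal n, c ij.1 * c' ij.2) = mk c * mk c' := by
    ext n; simp [coeff_mul]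
  have mk_add : mk (fun n => l n + l' n) = mk l + mk l' := by ext n; simp
  rw [isExpSeq_iff_derivative] at h h' ⊢
  refine ⟨by simp [h.1, h'.1], ?_⟩
  rw [mk_conv, mk_add, Derivation.leibniz, smul_eq_mul, smul_eq_mul]
  linear_combination mk c' * h.2 + mk c * h'.2

lemma IsExpSeq.mul_pow {l c : ℕ → ℝ} (h : IsExpSeq l c) (t : ℝ) :
    IsExpSeq (fun n => l n * t ^ n) (fun n => c n * t ^ n) := by
  refine ⟨by simp [h.1], fun n => ?_⟩
  rw [← mul_assoc, h.2 n, Finset.sum_mul]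
  refine Finset.sum_congr rfl fun ij hij => ?_
  rw [← mem_antidiagonal.1 hij, pow_add]
  ring

lemma IsExpSeq.log_eq_one {l c : ℕ → ℝ} {m j : ℕ} (h : IsExpSeq l c) (hc : ∀ n ≤ m, c n = 1)
    (h1j : 1 ≤ j) (hj : j ≤ m) : l j = 1 := by
  have sum_range (n : ℕ) (hn : n ≤ m) : ∑ i ∈ Finset.range (n + 1), l i = n := by
    have hrec := h.2 n
    rw [hc n hn, mul_one, Finset.Nat.sum_antidiagonal_eq_sum_range_succ_mk] at hrec
    rw [hrec]
    exact Finset.sum_congr rfl fun i _ => by rw [hc _ (by omega), mul_one]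
  obtain ⟨i, rfl⟩ := Nat.exists_eq_add_of_le' h1j
  have hsucc := sum_range (i + 1) hj
  rw [Finset.sum_range_succ, sum_range i (by omega)] at hsucc
  push_cast at hsucc
  linarith

/-- The coefficients of `z * d/dz log (1 - z ^ d)⁻¹ = ∑ k ≥ 1, d * z ^ (d * k)`, the contribution of
a prime of degree `d` to the logarithmic derivative of an Euler product. -/
def eulerLogCoeff (d j : ℕ) : ℕ :=
  if j ≠ 0 ∧ d ∣ j then d else 0

lemma mk_eulerLogCoeff_mul {d : ℕ} (hd : 0 < d) :
    mk (fun j => (eulerLogCoeff d j : ℝ)) * (1 - X ^ d)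
      = (d : ℝ⟦X⟧) * X ^ d := by
  have period (n : ℕ) : (eulerLogCoeff d n : ℝ) =
      (if n = d then (d : ℝ) else 0) + if d ≤ n then (eulerLogCoeff d (n - d) : ℝ) else 0 := by
    simp only [eulerLogCoeff]
    obtain hn | hn := lt_or_ge n d
    · have : ¬ (n ≠ 0 ∧ d ∣ n) := fun h => (Nat.le_of_dvd (by omega) h.2).not_gt hn
      simp [this, hn.ne, hn.not_ge]
    · obtain ⟨k, rfl⟩ := Nat.exists_eq_add_of_le hn
      by_cases hk : k = 0 <;> simp [hk, hd.ne']
  ext n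
  rw [mul_one_sub, map_sub, coeff_mk, coeff_mul_X_pow',
    ← map_natCast (C (R := ℝ)) d, coeff_C_mul_X_pow, period]
  simp only [coeff_mk, add_sub_cancel_right]

lemma IsExpSeq.of_one_sub_X_pow_mul {l b a : ℕ → ℝ} {d : ℕ} (hd : 0 < d) (hb : IsExpSeq l b)
    (hab : ∀ n, a n = b n + if d ≤ n then a (n - d) else 0) :
    IsExpSeq (fun j => l j + eulerLogCoeff d j) a := by
  rw [isExpSeq_iff_derivative] at hb ⊢
  obtain ⟨hb0, hb⟩ := hb
  refine ⟨by simp [hab 0, hb0, hd.ne'], ?_⟩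
  have euler_factor : mk a * (1 - X ^ d) = mk b := by
    ext n
    simp [mul_one_sub, coeff_mul_X_pow', hab n]
  have hu : (1 - X ^ d : ℝ⟦X⟧) ≠ 0 := fun h => by
    simpa [hd.ne'] using congrArg constantCoeff h
  refine mul_right_cancel₀ hu ?_
  have mk_add : mk (fun j => l j + (eulerLogCoeff d j : ℝ))
      = mk l + mk (fun j => (eulerLogCoeff d j : ℝ)) := by ext; simp
  obtain ⟨e, rfl⟩ : ∃ e, d = e + 1 := ⟨d - 1, by omega⟩
  rw [← euler_factor, Derivation.leibniz, map_sub, Derivation.map_one_eq_zero,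
    Derivation.leibniz_pow, derivative_X] at hb
  have key := mk_eulerLogCoeff_mul hd
  rw [mk_add]
  simp only [smul_eq_mul, nsmul_eq_mul, Nat.add_sub_cancel] at hb
  linear_combination hb - mk a * key

lemma hasSum_coeff_mul_mul_pow {a b : ℝ⟦X⟧} {y A B : ℝ}
    (ha : HasSum (fun n => coeff n a * y ^ n) A) (hb : HasSum (fun n => coeff n b * y ^ n) B) :
    HasSum (fun n => coeff n (a * b) * y ^ n) (A * B) := by
  have cauchy (n : ℕ) : ∑ ij ∈ antidiagonal n, coeff ij.1 a * y ^ ij.1 * (coeff ij.2 b * y ^ ij.2)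
      = coeff n (a * b) * y ^ n := by
    rw [coeff_mul, Finset.sum_mul]
    refine Finset.sum_congr rfl fun ij hij => ?_
    rw [← mem_antidiagonal.1 hij, pow_add]
    ring
  have ha' := ha.summable.norm
  have hb' := hb.summable.norm
  have hs := (summable_norm_sum_mul_antidiagonal_of_summable_norm ha' hb').of_norm
  have ht := tsum_mul_tsum_eq_tsum_sum_antidiagonal_of_summable_norm ha' hb'
  rw [ha.tsum_eq, hb.tsum_eq] at ht
  simpa only [cauchy, ht] using hs.hasSum

lemma hasSum_coeff_pow_mul_pow {a : ℝ⟦X⟧} {y A : ℝ}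
    (ha : HasSum (fun n => coeff n a * y ^ n) A) (d : ℕ) :
    HasSum (fun n => coeff n (a ^ d) * y ^ n) (A ^ d) := by
  induction d with
  | zero =>
    simpa [coeff_one] using hasSum_single (f := fun n => coeff n (1 : ℝ⟦X⟧) * y ^ n) 0
      fun n hn => by simp [coeff_one, hn]
  | succ d ih => simpa only [pow_succ] using hasSum_coeff_mul_mul_pow ih ha

lemma coeff_pow_nonneg {a : ℝ⟦X⟧} (ha : ∀ n, 0 ≤ coeff n a) (d n : ℕ) : 0 ≤ coeff n (a ^ d) := by
  induction d generalizing n with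
  | zero => rw [pow_zero, coeff_one]; positivity
  | succ d ih =>
    rw [pow_succ, coeff_mul]
    exact Finset.sum_nonneg fun ij _ => mul_nonneg (ih _) (ha _)

/-- The coefficients of `exp (∑ i ≥ 1, l i * z ^ i / i)`; the value `l 0` is irrelevant, because
`l 0 / 0 = 0`. -/
noncomputable def expCoeff (l : ℕ → ℝ) (n : ℕ) : ℝ :=
  coeff n ((PowerSeries.exp ℝ).subst (mk fun i => l i / i))

lemma hasSubst_mk_div (l : ℕ → ℝ) : HasSubst (mk fun i => l i / i : ℝ⟦X⟧) :=
  HasSubst.of_constantCoeff_zero' (by simp [← coeff_zero_eq_constantCoeff_apply])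

lemma isExpSeq_expCoeff {l : ℕ → ℝ} (hl : l 0 = 0) : IsExpSeq l (expCoeff l) := by
  have hL := hasSubst_mk_div l
  have X_mul_derivative : X * PowerSeries.derivative ℝ (mk fun i => l i / i) = mk l := by
    ext (_ | n)
    · simp [hl]
    · rw [coeff_succ_X_mul, coeff_derivative, coeff_mk, coeff_mk]
      push_cast
      field_simp
  have mk_expCoeff : mk (expCoeff l) = (PowerSeries.exp ℝ).subst (mk fun i => l i / i) := by
    ext n; rw [coeff_mk, expCoeff]
  refine isExpSeq_iff_derivative.2 ⟨?_, ?_⟩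
  · rw [expCoeff, coeff_subst' hL, finsum_eq_single _ 0 fun d hd => ?_]
    · simp
    · simp [coeff_zero_eq_constantCoeff_apply, hd]
  · rw [mk_expCoeff, derivative_subst hL, derivative_exp, ← X_mul_derivative]
    ring

lemma hasSum_expCoeff (l : ℕ → ℝ) (n : ℕ) :
    HasSum (fun d : ℕ => (d.factorial : ℝ)⁻¹ * coeff n ((mk fun i => l i / i : ℝ⟦X⟧) ^ d))
      (expCoeff l n) := by
  have hL := hasSubst_mk_div l
  have hfin := coeff_subst_finite' hL (PowerSeries.exp ℝ) n
  rw [expCoeff, coeff_subst' hL, ← tsum_eq_finsum (L := .unconditional ℕ) hfin]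
  simpa [coeff_exp] using (summable_of_hasFiniteSupport hfin).hasSum

lemma expCoeff_nonneg {l : ℕ → ℝ} (hl : ∀ i, 0 ≤ l i) (n : ℕ) : 0 ≤ expCoeff l n := by
  refine (hasSum_expCoeff l n).nonneg fun d => mul_nonneg (by positivity) ?_
  refine coeff_pow_nonneg (fun i => ?_) d n
  rw [coeff_mk]
  exact div_nonneg (hl i) i.cast_nonneg

lemma hasSum_expCoeff_mul_pow {l : ℕ → ℝ} {y S : ℝ} (hl : ∀ i, 0 ≤ l i) (hy : 0 ≤ y)
    (hS : HasSum (fun i => l i * y ^ i / i) S) :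
    HasSum (fun n => expCoeff l n * y ^ n) (Real.exp S) := by
  set a : ℝ⟦X⟧ := mk fun i => l i / i with ha
  have ha0 (i : ℕ) : 0 ≤ coeff i a := by
    rw [ha, coeff_mk]; exact div_nonneg (hl i) i.cast_nonneg
  have haS : HasSum (fun n => coeff n a * y ^ n) S := by
    simpa only [ha, coeff_mk, div_mul_eq_mul_div] using hS
  let f : ℕ × ℕ → ℝ := fun p => (p.1.factorial : ℝ)⁻¹ * (coeff p.2 (a ^ p.1) * y ^ p.2)
  have hrow (d : ℕ) : HasSum (fun n => f (d, n)) ((d.factorial : ℝ)⁻¹ * S ^ d) :=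
    (hasSum_coeff_pow_mul_pow haS d).mul_left _
  have hcol (n : ℕ) : HasSum (fun d => f (d, n)) (expCoeff l n * y ^ n) := by
    simpa only [f, mul_assoc] using (hasSum_expCoeff l n).mul_right (y ^ n)
  have hexp : HasSum (fun d : ℕ => (d.factorial : ℝ)⁻¹ * S ^ d) (Real.exp S) := by
    simpa [Real.exp_eq_exp_ℝ] using NormedSpace.exp_series_hasSum_exp' (𝕂 := ℝ) S
  have hf : HasSum f (Real.exp S) := by
    have hs : Summable f := (summable_prod_of_nonneg fun p =>
      mul_nonneg (by positivity) (mul_nonneg (coeff_pow_nonneg ha0 _ _) (pow_nonneg hy _))).2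
      ⟨fun d => (hrow d).summable, hexp.summable.congr fun d => (hrow d).tsum_eq.symm⟩
    rw [hexp.unique (hs.hasSum.prod_fiberwise hrow)]
    exact hs.hasSum
  exact ((Equiv.prodComm ℕ ℕ).hasSum_iff.2 hf).prod_fiberwise hcol

end ExpSeq

/-! ### Random permutations -/

section Permutations

open Finset Nat

/-- The number `z_λ = ∏ i, i ^ (m_i) * (m_i)!` attached to the partition `λ` whose multiset of parts
is `s`: the order of the centralizer of a permutation of cycle type `λ`. -/
def centralizerCard (s : Multiset ℕ) : ℕ :=
  s.prod * ∏ i ∈ s.toFinset, (s.count i)!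

lemma centralizerCard_pos {s : Multiset ℕ} (hs : ∀ i ∈ s, 0 < i) : 0 < centralizerCard s :=
  Nat.mul_pos (Multiset.prod_pos hs) (prod_pos fun _ _ => factorial_pos _)

lemma centralizerCard_cons (i : ℕ) (t : Multiset ℕ) :
    centralizerCard (i ::ₘ t) = i * (t.count i + 1) * centralizerCard t := by
  have hi : i ∈ (i ::ₘ t).toFinset := by simp
  have ht : ∏ j ∈ t.toFinset, (t.count j)! = ∏ j ∈ (i ::ₘ t).toFinset, (t.count j)! :=
    prod_subset (by simp [subset_insert]) fun j _ hj => by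
      rw [Multiset.count_eq_zero_of_notMem (mt Multiset.mem_toFinset.2 hj), factorial_zero]
  have herase : ∏ j ∈ (i ::ₘ t).toFinset.erase i, ((i ::ₘ t).count j)!
      = ∏ j ∈ (i ::ₘ t).toFinset.erase i, (t.count j)! :=
    prod_congr rfl fun j hj => by rw [Multiset.count_cons_of_ne (ne_of_mem_erase hj)]
  rw [centralizerCard, centralizerCard, ht, Multiset.prod_cons, ← mul_prod_erase _ _ hi,
    ← mul_prod_erase _ _ hi, herase, Multiset.count_cons_self, factorial_succ]
  ring

lemma centralizerCard_add_replicate_one {c : Multiset ℕ} (hc : 1 ∉ c) (k : ℕ) :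
    centralizerCard (c + Multiset.replicate k 1) = k ! * centralizerCard c := by
  induction k with
  | zero => simp
  | succ k ih =>
    rw [Multiset.replicate_succ, Multiset.add_cons, centralizerCard_cons, ih, Multiset.count_add,
      Multiset.count_eq_zero_of_notMem hc, Multiset.count_replicate_self, factorial_succ]
    ring

/-- The partitions of `n` into parts of size at most `m`, as multisets. -/
noncomputable def boundedParts (m n : ℕ) : Finset (Multiset ℕ) :=
  ((univ : Finset (Nat.Partition n)).image Nat.Partition.parts).filter fun s => ∀ i ∈ s, i ≤ m

lemma mem_boundedParts {m n : ℕ} {s : Multiset ℕ} :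
    s ∈ boundedParts m n ↔ (∀ i ∈ s, 1 ≤ i ∧ i ≤ m) ∧ s.sum = n := by
  rw [boundedParts, mem_filter, mem_image]
  constructor
  · rintro ⟨⟨p, -, rfl⟩, hp⟩
    exact ⟨fun i hi => ⟨p.parts_pos hi, hp i hi⟩, p.parts_sum⟩
  · rintro ⟨hs, hsum⟩
    exact ⟨⟨⟨s, fun {i} hi => (hs i hi).1, hsum⟩, mem_univ _, rfl⟩, fun i hi => (hs i hi).2⟩

lemma boundedParts_zero (m : ℕ) : boundedParts m 0 = {0} := by
  ext s
  rw [mem_boundedParts, mem_singleton]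
  refine ⟨fun ⟨hs, hsum⟩ => Multiset.eq_zero_of_forall_notMem fun i hi => ?_, by rintro rfl; simp⟩
  exact (hs i hi).1.not_gt (by simp [Multiset.sum_eq_zero_iff.1 hsum i hi])

lemma cons_mem_boundedParts {m n i : ℕ} {t : Multiset ℕ} :
    i ::ₘ t ∈ boundedParts m n ↔ i ∈ Icc 1 (min n m) ∧ t ∈ boundedParts m (n - i) := by
  simp only [mem_boundedParts, Multiset.forall_mem_cons, Multiset.sum_cons, mem_Icc, le_min_iff]
  grind

lemma sum_boundedParts_erase (m n : ℕ) (f : Multiset ℕ → ℝ) :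
    ∑ s ∈ boundedParts m n, ∑ i ∈ s.toFinset, f (s.erase i)
      = ∑ i ∈ Icc 1 (min n m), ∑ t ∈ boundedParts m (n - i), f t := by
  rw [sum_sigma', sum_sigma']
  refine sum_bij' (fun x _ => ⟨x.2, x.1.erase x.2⟩) (fun y _ => ⟨y.1 ::ₘ y.2, y.1⟩) ?_ ?_ ?_ ?_ ?_
  · rintro ⟨s, i⟩ h
    obtain ⟨hs, hi⟩ := mem_sigma.1 h
    rw [Multiset.mem_toFinset] at hi
    rw [← Multiset.cons_erase hi, cons_mem_boundedParts] at hs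
    exact mem_sigma.2 hs
  · rintro ⟨i, t⟩ h
    exact mem_sigma.2 ⟨cons_mem_boundedParts.2 (mem_sigma.1 h), by simp⟩
  · rintro ⟨s, i⟩ h
    simp [Multiset.cons_erase (Multiset.mem_toFinset.1 (mem_sigma.1 h).2)]
  · rintro ⟨i, t⟩ -
    simp
  · rintro ⟨s, i⟩ -
    rfl

lemma mul_inv_centralizerCard {s : Multiset ℕ} (hs : ∀ i ∈ s, 0 < i) :
    (s.sum : ℝ) * (centralizerCard s : ℝ)⁻¹
      = ∑ i ∈ s.toFinset, (centralizerCard (s.erase i) : ℝ)⁻¹ := by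
  rw [sum_multiset_count, Nat.cast_sum, sum_mul]
  refine sum_congr rfl fun i hi => ?_
  obtain ⟨t, rfl⟩ := Multiset.exists_cons_of_mem (Multiset.mem_toFinset.1 hi)
  have hi0 : (i : ℝ) ≠ 0 := by exact_mod_cast (hs i (Multiset.mem_cons_self i t)).ne'
  rw [Multiset.erase_cons_head, centralizerCard_cons, Multiset.count_cons_self]
  push_cast [smul_eq_mul]
  rw [mul_comm (i : ℝ), mul_inv, ← mul_assoc, mul_inv_cancel₀ (by positivity), one_mul]

lemma exists_eq_add_replicate_one {s : Multiset ℕ} (hs : ∀ i ∈ s, 0 < i) :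
    ∃ (c : Multiset ℕ) (k : ℕ), (∀ a ∈ c, 2 ≤ a) ∧ s = c + Multiset.replicate k 1 := by
  refine ⟨s.filter (2 ≤ ·), _, fun a ha => (Multiset.mem_filter.1 ha).2,
    (Multiset.filter_add_not (2 ≤ ·) s).symm.trans (congrArg _ (Multiset.eq_replicate_card.2 ?_))⟩
  intro b hb
  obtain ⟨hbs, hb2⟩ := Multiset.mem_filter.1 hb
  have := hs b hbs
  omega

lemma parts_partition_eq_iff {n k : ℕ} {c : Multiset ℕ} (hc : ∀ a ∈ c, 2 ≤ a)
    (hn : c.sum + k = n) (g : Equiv.Perm (Fin n)) :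
    g.partition.parts = c + Multiset.replicate k 1 ↔ g.cycleType = c := by
  constructor
  · intro h
    rw [← Equiv.Perm.filter_parts_partition_eq_cycleType, h, Multiset.filter_add,
      Multiset.filter_eq_self.2 hc, Multiset.filter_eq_nil.2 fun a ha => ?_, add_zero]
    simp [Multiset.eq_of_mem_replicate ha]
  · rintro rfl
    rw [Equiv.Perm.parts_partition, ← Equiv.Perm.sum_cycleType, Fintype.card_fin,
      ← Nat.eq_sub_of_add_eq' hn]

open Classical in
lemma card_filter_parts_partition {s : Multiset ℕ} {n : ℕ} (hs : ∀ i ∈ s, 0 < i)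
    (hn : s.sum = n) :
    (#{g : Equiv.Perm (Fin n) | g.partition.parts = s} : ℝ) = n ! * (centralizerCard s : ℝ)⁻¹ := by
  obtain ⟨c, k, hc, rfl⟩ := exists_eq_add_replicate_one hs
  replace hn : c.sum + k = n := by simpa using hn
  have class_size := Equiv.Perm.card_of_cycleType_mul_eq (Fin n) c
  rw [if_pos ⟨by simp [← hn], hc⟩, Fintype.card_fin, ← Nat.eq_sub_of_add_eq' hn, mul_assoc]
    at class_size
  rw [← div_eq_mul_inv, eq_div_iff (by exact_mod_cast (centralizerCard_pos hs).ne'),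
    centralizerCard_add_replicate_one (fun h1 => by simpa using hc 1 h1), centralizerCard]
  simp only [parts_partition_eq_iff hc hn]
  exact_mod_cast class_size

lemma forall_mem_cycleType_le_iff {n m : ℕ} (hm : 1 ≤ m) (σ : Equiv.Perm (Fin n)) :
    (∀ c ∈ σ.cycleType, c ≤ m) ↔ σ.partition.parts ∈ boundedParts m n := by
  have hsum : σ.partition.parts.sum = n := by rw [σ.partition.parts_sum, Fintype.card_fin]
  rw [mem_boundedParts, and_iff_left hsum]
  constructor
  · intro h i hi
    refine ⟨σ.partition.parts_pos hi, ?_⟩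
    rw [Equiv.Perm.parts_partition] at hi
    obtain hi | hi := Multiset.mem_add.1 hi
    · exact h i hi
    · rwa [Multiset.eq_of_mem_replicate hi]
  · intro h c hc
    exact (h c (by rw [Equiv.Perm.parts_partition]; exact Multiset.mem_add.2 (Or.inl hc))).2

lemma permProb_eq_sum (n : ℕ) {m : ℕ} (hm : 1 ≤ m) :
    permProb n m = ∑ s ∈ boundedParts m n, (centralizerCard s : ℝ)⁻¹ := by
  classical
  rw [permProb, div_eq_iff (by positivity), Nat.card_eq_fintype_card, Fintype.card_subtype,
    card_eq_sum_card_fiberwise (f := fun g => g.partition.parts) (t := boundedParts m n)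
      fun σ hσ => (forall_mem_cycleType_le_iff hm σ).1 (mem_filter.1 hσ).2, Nat.cast_sum, sum_mul]
  refine sum_congr rfl fun s hs => ?_
  have hs' := mem_boundedParts.1 hs
  rw [mul_comm, ← card_filter_parts_partition (fun i hi => (hs'.1 i hi).1) hs'.2, filter_filter]
  refine congrArg (fun t : Finset _ => (#t : ℝ)) (filter_congr fun σ _ => ?_)
  rw [and_iff_right_iff_imp, forall_mem_cycleType_le_iff hm]
  rintro rfl
  exact hs

lemma mul_permProb (n : ℕ) {m : ℕ} (hm : 1 ≤ m) :
    n * permProb n m = ∑ i ∈ Icc 1 (min n m), permProb (n - i) m := by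
  simp only [permProb_eq_sum _ hm]
  rw [← sum_boundedParts_erase m n fun s => (centralizerCard s : ℝ)⁻¹, mul_sum]
  refine sum_congr rfl fun s hs => ?_
  obtain ⟨hparts, rfl⟩ := mem_boundedParts.1 hs
  exact mul_inv_centralizerCard fun i hi => (hparts i hi).1

lemma isExpSeq_permProb {m : ℕ} (hm : 1 ≤ m) :
    IsExpSeq (fun i => if 1 ≤ i ∧ i ≤ m then 1 else 0) (fun n => permProb n m) := by
  refine ⟨by simp [permProb_eq_sum 0 hm, boundedParts_zero, centralizerCard], fun n => ?_⟩
  rw [mul_permProb n hm, Finset.Nat.sum_antidiagonal_eq_sum_range_succ_mk]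
  simp only [ite_mul, one_mul, zero_mul, ← sum_filter]
  refine sum_congr (ext fun i => ?_) fun i _ => rfl
  simp only [mem_Icc, mem_filter, mem_range]
  omega

lemma permProb_pos (n m : ℕ) : 0 < permProb n m := by
  have : Nonempty {σ : Equiv.Perm (Fin n) // ∀ c ∈ σ.cycleType, c ≤ m} := ⟨⟨1, by simp⟩⟩
  exact div_pos (Nat.cast_pos.2 Nat.card_pos) (by positivity)

end Permutations

/-! ### Friable polynomials -/

section Polynomials

open Polynomial Finset

variable {F : Type*} [Field F]

/-- The monic polynomials of degree `n` all of whose monic irreducible factors lie in `S`. -/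
def monicsOver (S : Finset F[X]) (n : ℕ) : Set F[X] :=
  {f | f.Monic ∧ f.natDegree = n ∧ ∀ p : F[X], p.Monic → Irreducible p → p ∣ f → p ∈ S}

lemma monicsOver_empty (n : ℕ) : monicsOver (∅ : Finset F[X]) n = if n = 0 then {1} else ∅ := by
  have eq_one {f : F[X]} (hf : f ∈ monicsOver ∅ n) : f = 1 := by
    by_contra h1
    obtain ⟨p, hp, hpi, hpf⟩ := Polynomial.exists_monic_irreducible_factor f
      (mt hf.1.isUnit_iff.1 h1)
    exact notMem_empty p (hf.2.2 p hp hpi hpf)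
  ext f
  constructor
  · intro hf
    obtain rfl := eq_one hf
    simp [← hf.2.1]
  · split_ifs with hn
    · rintro rfl
      exact ⟨monic_one, by rw [natDegree_one, hn],
        fun p _ hp h1 => (hp.not_isUnit (isUnit_of_dvd_one h1)).elim⟩
    · exact fun hf => hf.elim

lemma monicsOver_inter_dvd {S : Finset F[X]} {P : F[X]} {n : ℕ} (hP : P.Monic)
    (hPi : Irreducible P) (hPS : P ∈ S) (hn : P.natDegree ≤ n) :
    monicsOver S n ∩ {f | P ∣ f} = (P * ·) '' monicsOver S (n - P.natDegree) := by
  ext f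
  constructor
  · rintro ⟨⟨hf, hfn, hfS⟩, g, rfl⟩
    have hg : g.Monic := hP.of_mul_monic_left hf
    rw [hP.natDegree_mul hg] at hfn
    exact ⟨g, ⟨hg, by omega, fun p hp hpi hpg => hfS p hp hpi (hpg.mul_left P)⟩, rfl⟩
  · rintro ⟨g, ⟨hg, hgn, hgS⟩, rfl⟩
    refine ⟨⟨hP.mul hg, by rw [hP.natDegree_mul hg]; omega, fun p hp hpi hpf => ?_⟩,
      dvd_mul_right P g⟩
    obtain hpP | hpg := hpi.prime.dvd_or_dvd hpf
    · rwa [eq_of_monic_of_associated hp hP (hpi.associated_of_dvd hPi hpP)]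
    · exact hgS p hp hpi hpg

variable [Finite F]

lemma finite_setOf_natDegree_le (m : ℕ) : {p : F[X] | p.natDegree ≤ m}.Finite := by
  have : Finite (degreeLT F (m + 1)) := Finite.of_equiv _ (degreeLTEquiv F (m + 1)).symm.toEquiv
  refine Set.Finite.subset (Set.toFinite (degreeLT F (m + 1) : Set F[X])) fun p hp => ?_
  rw [SetLike.mem_coe, mem_degreeLT]
  exact degree_le_natDegree.trans_lt (by exact_mod_cast Nat.lt_succ_of_le hp)

lemma finite_monicsOver (S : Finset F[X]) (n : ℕ) : (monicsOver S n).Finite :=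
  (finite_setOf_natDegree_le n).subset fun _ hf => hf.2.1.le

open Classical in
lemma ncard_monicsOver_insert {S : Finset F[X]} {P : F[X]} (hP : P.Monic) (hPi : Irreducible P)
    (hPS : P ∉ S) (n : ℕ) :
    (monicsOver (insert P S) n).ncard = (monicsOver S n).ncard +
      if P.natDegree ≤ n then (monicsOver (insert P S) (n - P.natDegree)).ncard else 0 := by
  have not_dvd : monicsOver S n = monicsOver (insert P S) n \ {f | P ∣ f} := by
    ext f
    simp only [monicsOver, Set.mem_sdiff, Set.mem_ofPred_eq]
    grind
  rw [not_dvd, ← Set.ncard_inter_add_ncard_sdiff_eq_ncard _ {f | P ∣ f} (finite_monicsOver _ _),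
    add_comm]
  congr 1
  split_ifs with hn
  · rw [monicsOver_inter_dvd hP hPi (mem_insert_self P S) hn,
      Set.ncard_image_of_injective _ (mul_right_injective₀ hP.ne_zero)]
  · rw [(Set.ncard_eq_zero ((finite_monicsOver _ n).inter_of_left _)).2]
    refine Set.eq_empty_of_forall_notMem fun f ⟨hf, hPf⟩ => hn ?_
    exact (natDegree_le_of_dvd hPf hf.1.ne_zero).trans_eq hf.2.1

lemma isExpSeq_ncard_monicsOver (S : Finset F[X]) (hS : ∀ P ∈ S, P.Monic ∧ Irreducible P) :
    IsExpSeq (fun j => ∑ P ∈ S, (eulerLogCoeff P.natDegree j : ℝ))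
      (fun n => ((monicsOver S n).ncard : ℝ)) := by
  classical
  induction S using Finset.induction_on with
  | empty =>
    refine ⟨by simp [monicsOver_empty], fun n => ?_⟩
    obtain rfl | hn := eq_or_ne n 0 <;> simp [monicsOver_empty, *]
  | insert P S hPS ih =>
    obtain ⟨hP, hPi⟩ := hS P (mem_insert_self P S)
    simp only [sum_insert hPS, add_comm (eulerLogCoeff P.natDegree _ : ℝ)]
    refine (ih fun Q hQ => hS Q (mem_insert_of_mem hQ)).of_one_sub_X_pow_mul
      hPi.natDegree_pos fun n => ?_
    rw [ncard_monicsOver_insert hP hPi hPS]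
    push_cast
    rfl

lemma finite_setOf_monic_irreducible (F : Type*) [Field F] [Finite F] (m : ℕ) :
    {p : F[X] | p.Monic ∧ Irreducible p ∧ p.natDegree ≤ m}.Finite :=
  (finite_setOf_natDegree_le m).subset fun _ hp => hp.2.2

/-- The monic irreducible polynomials of degree at most `m`, the index set of the Euler product
`FqFun F m`. -/
noncomputable def monicIrreducibles (F : Type*) [Field F] [Finite F] (m : ℕ) : Finset F[X] :=
  (finite_setOf_monic_irreducible F m).toFinset

lemma mem_monicIrreducibles {m : ℕ} {p : F[X]} :
    p ∈ monicIrreducibles F m ↔ p.Monic ∧ Irreducible p ∧ p.natDegree ≤ m :=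
  Set.Finite.mem_toFinset _

end Polynomials

/-! ### The logarithmic derivative of the Euler product -/

section EulerProduct

open Polynomial Finset

variable (F : Type) [Field F] [Fintype F]

/-- The coefficients of `z * d/dz log ∏ (1 - z ^ deg P)⁻¹`, the product being over the monic
irreducible polynomials of degree at most `m`. -/
noncomputable def eulerLogSum (m j : ℕ) : ℕ :=
  ∑ P ∈ monicIrreducibles F m, eulerLogCoeff P.natDegree j

/-- The coefficients of `z * d/dz log FqFun F m z`. -/
noncomputable def fqLogCoeff (m j : ℕ) : ℝ :=
  eulerLogSum F m j / (Fintype.card F : ℝ) ^ j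

variable {F} in
lemma polyProb_eq_ncard_monicsOver (n m : ℕ) :
    polyProb F n m
      = ((monicsOver (monicIrreducibles F m) n).ncard : ℝ) / (Fintype.card F : ℝ) ^ n := by
  rw [polyProb, ← Nat.card_coe_set_eq]
  congr 2
  refine Nat.card_congr (Equiv.subtypeEquivRight fun f => ?_)
  refine and_congr_right fun _ => and_congr_right fun _ => ?_
  refine forall_congr' fun p => forall_congr' fun hp => forall_congr' fun hpi => ?_
  simp [mem_monicIrreducibles, hp, hpi]

lemma isExpSeq_polyProb (m : ℕ) : IsExpSeq (fqLogCoeff F m) (fun n => polyProb F n m) := by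
  have hS : ∀ P ∈ monicIrreducibles F m, P.Monic ∧ Irreducible P := fun P hP =>
    (mem_monicIrreducibles.1 hP).imp_right And.left
  have h := (isExpSeq_ncard_monicsOver _ hS).mul_pow (Fintype.card F : ℝ)⁻¹
  change IsExpSeq (fun j => fqLogCoeff F m j) _
  simpa only [fqLogCoeff, eulerLogSum, Nat.cast_sum, polyProb_eq_ncard_monicsOver, div_eq_mul_inv,
    inv_pow] using h

variable {F} in
lemma polyProb_eq_one {n m : ℕ} (h : n ≤ m) : polyProb F n m = 1 := by
  have no_constraint : {f : F[X] // f.Monic ∧ f.natDegree = n ∧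
      ∀ p : F[X], p.Monic → Irreducible p → p ∣ f → p.natDegree ≤ m}
        ≃ {f : F[X] // f.Monic ∧ f.natDegree = n} :=
    Equiv.subtypeEquivRight fun f => and_congr_right fun hf => and_iff_left_of_imp
      fun hfn p _ _ hpf => (natDegree_le_of_dvd hpf hf.ne_zero).trans (hfn.trans_le h)
  have card_monic : Nat.card {f : F[X] // f.Monic ∧ f.natDegree = n} = Fintype.card F ^ n := by
    rw [Nat.card_congr ((monicEquivDegreeLT n).trans (degreeLTEquiv F n).toEquiv)]
    simp
  have : (Fintype.card F : ℝ) ≠ 0 := by simp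
  rw [polyProb, Nat.card_congr no_constraint, card_monic, Nat.cast_pow, div_self (by positivity)]

variable {F} {m j : ℕ}

lemma fqLogCoeff_eq_one (h1j : 1 ≤ j) (hj : j ≤ m) : fqLogCoeff F m j = 1 :=
  (isExpSeq_polyProb F m).log_eq_one (fun _ hn => polyProb_eq_one hn) h1j hj

lemma eulerLogSum_eq (h1j : 1 ≤ j) (hj : j ≤ m) : eulerLogSum F m j = Fintype.card F ^ j := by
  have h : (eulerLogSum F m j : ℝ) / (Fintype.card F : ℝ) ^ j = 1 := fqLogCoeff_eq_one h1j hj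
  rw [div_eq_one_iff_eq (by simp)] at h
  exact_mod_cast h

lemma card_pow_le_eulerLogSum_two_mul (hm : 1 ≤ m) :
    Fintype.card F ^ m ≤ eulerLogSum F m (2 * m) := by
  rw [← eulerLogSum_eq hm le_rfl]
  refine sum_le_sum fun P _ => ?_
  rw [eulerLogCoeff, eulerLogCoeff]
  split_ifs with h h'
  · exact le_rfl
  · exact absurd ⟨by omega, h.2.mul_left 2⟩ h'
  · exact Nat.zero_le _
  · exact le_rfl

lemma eulerLogSum_le (hj : m < j) :
    eulerLogSum F m j ≤ 2 * Fintype.card F ^ min m (j / 2) := by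
  set M := min m (j / 2) with hM
  have le_sum (P) (hP : P ∈ monicIrreducibles F m) : eulerLogCoeff P.natDegree j
      ≤ ∑ d ∈ range (M + 1), eulerLogCoeff P.natDegree d := by
    obtain ⟨-, hPi, hPm⟩ := mem_monicIrreducibles.1 hP
    rw [eulerLogCoeff]
    split_ifs with h
    · obtain ⟨k, rfl⟩ := h.2
      have hk : 2 ≤ k := by
        by_contra! hk
        interval_cases k <;> omega
      have hPM : P.natDegree ∈ range (M + 1) := by
        rw [mem_range, Nat.lt_succ_iff, hM, le_min_iff, Nat.le_div_iff_mul_le two_pos]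
        exact ⟨hPm, Nat.mul_le_mul_left _ hk⟩
      refine le_trans ?_ (single_le_sum (fun d _ => Nat.zero_le _) hPM)
      simp [eulerLogCoeff, hPi.natDegree_pos.ne']
    · exact Nat.zero_le _
  have eulerLogSum_small (d) (hd : d ∈ range (M + 1)) :
      eulerLogSum F m d ≤ Fintype.card F ^ d := by
    obtain rfl | hd0 := d.eq_zero_or_pos
    · simp [eulerLogSum, eulerLogCoeff]
    · exact (eulerLogSum_eq hd0 (by rw [mem_range] at hd; omega)).le
  have geom := Nat.geomSum_lt (s := range M) (Fintype.one_lt_card : 2 ≤ Fintype.card F)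
    fun k hk => mem_range.1 hk
  calc eulerLogSum F m j
      ≤ ∑ P ∈ monicIrreducibles F m, ∑ d ∈ range (M + 1), eulerLogCoeff P.natDegree d :=
        sum_le_sum le_sum
    _ = ∑ d ∈ range (M + 1), eulerLogSum F m d := sum_comm
    _ ≤ ∑ d ∈ range (M + 1), Fintype.card F ^ d := sum_le_sum eulerLogSum_small
    _ ≤ 2 * Fintype.card F ^ M := by rw [sum_range_succ]; omega

lemma hasSum_eulerLogCoeff_mul_pow_div {d : ℕ} {w : ℝ} (hd : 0 < d) (h0 : 0 ≤ w) (h1 : w < 1) :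
    HasSum (fun j => eulerLogCoeff d j * w ^ j / j) (log (1 - w ^ d)⁻¹) := by
  have hw : |w ^ d| < 1 := by
    rw [abs_of_nonneg (pow_nonneg h0 d)]
    exact pow_lt_one₀ h0 h1 hd.ne'
  have inj : Function.Injective fun k => d * (k + 1) := fun a b hab => by
    simpa [hd.ne'] using hab
  rw [log_inv, ← inj.hasSum_iff]
  · refine (Real.hasSum_pow_div_log_of_abs_lt_one hw).congr_fun fun k => ?_
    simp only [Function.comp_apply, eulerLogCoeff]
    rw [if_pos ⟨by positivity, dvd_mul_right d _⟩, ← pow_mul]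
    push_cast
    field_simp
  · rintro j hj
    rw [eulerLogCoeff, if_neg, Nat.cast_zero, zero_mul, zero_div]
    rintro ⟨hj0, k, rfl⟩
    exact hj ⟨k - 1, by simp [Nat.sub_add_cancel (Nat.pos_of_ne_zero (right_ne_zero_of_mul hj0))]⟩

lemma one_sub_div_card_pow_pos {y : ℝ} (hy : 0 ≤ y) (hyq : y < Fintype.card F) {P : F[X]}
    (hP : P ∈ monicIrreducibles F m) : 0 < 1 - (y / Fintype.card F) ^ P.natDegree := by
  have hw : y / Fintype.card F < 1 := (div_lt_one (hy.trans_lt hyq)).2 hyq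
  have := pow_lt_one₀ (by positivity) hw (mem_monicIrreducibles.1 hP).2.1.natDegree_pos.ne'
  linarith

lemma FqFun_eq_prod (m : ℕ) (y : ℝ) : FqFun F m y
    = ∏ P ∈ monicIrreducibles F m, (1 - (y / Fintype.card F) ^ P.natDegree)⁻¹ :=
  finprod_mem_eq_finite_toFinset_prod _ (finite_setOf_monic_irreducible F m)

lemma FqFun_pos {y : ℝ} (hy : 0 ≤ y) (hyq : y < Fintype.card F) : 0 < FqFun F m y := by
  rw [FqFun_eq_prod]
  exact prod_pos fun P hP => inv_pos.2 (one_sub_div_card_pow_pos hy hyq hP)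

lemma hasSum_fqLogCoeff {y : ℝ} (hy : 0 ≤ y) (hyq : y < Fintype.card F) :
    HasSum (fun j => fqLogCoeff F m j * y ^ j / j) (log (FqFun F m y)) := by
  rw [FqFun_eq_prod, log_prod fun P hP => (inv_pos.2 (one_sub_div_card_pow_pos hy hyq hP)).ne']
  refine (hasSum_sum fun P hP => hasSum_eulerLogCoeff_mul_pow_div
    (mem_monicIrreducibles.1 hP).2.1.natDegree_pos (by positivity)
    ((div_lt_one (hy.trans_lt hyq)).2 hyq)).congr_fun fun j => ?_
  rw [fqLogCoeff, eulerLogSum, Nat.cast_sum, sum_div, sum_mul, sum_div]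
  exact sum_congr rfl fun P _ => by rw [div_pow, mul_div_assoc', div_mul_eq_mul_div]

/-- The coefficients of `z * d/dz log Gq F m z`. -/
noncomputable def gqLogCoeff (F : Type) [Field F] [Fintype F] (m j : ℕ) : ℝ :=
  if j ≤ m then 0 else fqLogCoeff F m j

lemma fqLogCoeff_eq_gqLogCoeff_add (m j : ℕ) :
    fqLogCoeff F m j = gqLogCoeff F m j + if 1 ≤ j ∧ j ≤ m then 1 else 0 := by
  rw [gqLogCoeff]
  obtain rfl | hj := j.eq_zero_or_pos
  · simp [fqLogCoeff, eulerLogSum, eulerLogCoeff]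
  · by_cases hjm : j ≤ m
    · simp [hjm, fqLogCoeff_eq_one hj hjm, Nat.one_le_iff_ne_zero.1 hj]
    · simp [hjm]

lemma gqLogCoeff_nonneg (m j : ℕ) : 0 ≤ gqLogCoeff F m j := by
  rw [gqLogCoeff, fqLogCoeff]
  positivity

lemma gqLogCoeff_le (m j : ℕ) : gqLogCoeff F m j
    ≤ 2 * (Fintype.card F : ℝ) ^ min m (j / 2) / (Fintype.card F : ℝ) ^ j := by
  rw [gqLogCoeff, fqLogCoeff]
  split_ifs with h
  · positivity
  · gcongr
    exact_mod_cast eulerLogSum_le (not_le.1 h)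

lemma inv_card_pow_le_gqLogCoeff_two_mul (hm : 1 ≤ m) :
    ((Fintype.card F : ℝ) ^ m)⁻¹ ≤ gqLogCoeff F m (2 * m) := by
  rw [gqLogCoeff, if_neg (by omega), fqLogCoeff, two_mul, pow_add, inv_eq_one_div,
    div_le_div_iff₀ (by positivity) (by positivity), one_mul, ← two_mul]
  gcongr
  exact_mod_cast card_pow_le_eulerLogSum_two_mul hm

lemma hasSum_gqLogCoeff {y : ℝ} (hy : 0 ≤ y) (hyq : y < Fintype.card F) :
    HasSum (fun j => gqLogCoeff F m j * y ^ j / j)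
      (log (FqFun F m y) - ∑ i ∈ Icc 1 m, y ^ i / i) := by
  have small : HasSum (fun j : ℕ => (if 1 ≤ j ∧ j ≤ m then 1 else 0) * y ^ j / j)
      (∑ i ∈ Icc 1 m, y ^ i / i) := by
    simpa [← mem_Icc, ite_mul, ite_div, Finset.sum_ite_mem] using hasSum_sum_of_ne_finset_zero
      (L := .unconditional ℕ) (s := Icc 1 m)
      (f := fun j : ℕ => (if 1 ≤ j ∧ j ≤ m then 1 else 0) * y ^ j / j)
      fun j hj => by simp [← mem_Icc, hj]
  refine ((hasSum_fqLogCoeff hy hyq).sub small).congr_fun fun j => ?_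
  rw [fqLogCoeff_eq_gqLogCoeff_add]
  ring

lemma Gq_eq_exp_tsum {y : ℝ} (hy : 0 ≤ y) (hyq : y < Fintype.card F) :
    Gq F m y = exp (∑' j, gqLogCoeff F m j * y ^ j / j) := by
  rw [(hasSum_gqLogCoeff hy hyq).tsum_eq, sub_eq_add_neg, exp_add, exp_log (FqFun_pos hy hyq), Gq]

lemma Gq_pos {y : ℝ} (hy : 0 ≤ y) (hyq : y < Fintype.card F) : 0 < Gq F m y := by
  rw [Gq_eq_exp_tsum hy hyq]
  exact exp_pos _

/-- The Taylor coefficients of `Gq F m`. -/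
noncomputable def gqCoeff (F : Type) [Field F] [Fintype F] (m k : ℕ) : ℝ :=
  expCoeff (gqLogCoeff F m) k

lemma gqCoeff_nonneg (m k : ℕ) : 0 ≤ gqCoeff F m k :=
  expCoeff_nonneg (gqLogCoeff_nonneg m) k

lemma hasSum_gqCoeff {y : ℝ} (hy : 0 ≤ y) (hyq : y < Fintype.card F) :
    HasSum (fun k => gqCoeff F m k * y ^ k) (Gq F m y) := by
  rw [Gq_eq_exp_tsum hy hyq]
  exact hasSum_expCoeff_mul_pow (gqLogCoeff_nonneg m) hy (hasSum_gqLogCoeff hy hyq).summable.hasSum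

lemma polyProb_eq_sum (n : ℕ) (hm : 1 ≤ m) :
    polyProb F n m = ∑ k ∈ range (n + 1), gqCoeff F m k * permProb (n - k) m := by
  have hconv := (isExpSeq_expCoeff (l := gqLogCoeff F m) (by simp [gqLogCoeff])).mul
    (isExpSeq_permProb hm)
  simp only [← fqLogCoeff_eq_gqLogCoeff_add] at hconv
  rw [congrFun ((isExpSeq_polyProb F m).unique hconv) n,
    Finset.Nat.sum_antidiagonal_eq_sum_range_succ_mk]
  rfl

end EulerProduct

/-! ### Log-concavity of the permutation probabilities -/

section MonotoneRatio

variable {p : ℕ → ℝ} {c N k : ℕ}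

lemma mul_ratio_pow_le (hp : ∀ n, 0 < p n) (hr : Monotone fun n => p n / p (n + 1)) (hN : c ≤ N) :
    p (N + k) * (p c / p (c + 1)) ^ k ≤ p N := by
  have hr0 : 0 < p c / p (c + 1) := div_pos (hp c) (hp (c + 1))
  induction k with
  | zero => simp
  | succ k ih =>
    have one_step : p (N + k + 1) * (p c / p (c + 1)) ≤ p (N + k) :=
      (le_div_iff₀' (hp _)).1 (hr (hN.trans (Nat.le_add_right N k)))
    calc p (N + k + 1) * (p c / p (c + 1)) ^ (k + 1)
        = p (N + k + 1) * (p c / p (c + 1)) * (p c / p (c + 1)) ^ k := by ring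
      _ ≤ p (N + k) * (p c / p (c + 1)) ^ k := by gcongr
      _ ≤ p N := ih

lemma le_mul_ratio_pow (hp : ∀ n, 0 < p n) (hr : Monotone fun n => p n / p (n + 1))
    (hN : N + k ≤ c + 1) : p N ≤ p (N + k) * (p c / p (c + 1)) ^ k := by
  have hr0 : 0 < p c / p (c + 1) := div_pos (hp c) (hp (c + 1))
  induction k with
  | zero => simp
  | succ k ih =>
    have one_step : p (N + k) ≤ p (N + k + 1) * (p c / p (c + 1)) :=
      (div_le_iff₀' (hp _)).1 (hr (show N + k ≤ c by omega))
    calc p N ≤ p (N + k) * (p c / p (c + 1)) ^ k := ih (by omega)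
      _ ≤ p (N + k + 1) * (p c / p (c + 1)) * (p c / p (c + 1)) ^ k := by gcongr
      _ = p (N + k + 1) * (p c / p (c + 1)) ^ (k + 1) := by ring

lemma mul_ratio_pow_le_peak (hp : ∀ n, 0 < p n) (hr : Monotone fun n => p n / p (n + 1)) :
    p N * (p c / p (c + 1)) ^ N ≤ p (c + 1) * (p c / p (c + 1)) ^ (c + 1) := by
  have hr0 : 0 < p c / p (c + 1) := div_pos (hp c) (hp (c + 1))
  obtain h | h := le_total N (c + 1) <;> obtain ⟨k, hk⟩ := Nat.exists_eq_add_of_le h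
  · have hN := mul_le_mul_of_nonneg_right (le_mul_ratio_pow hp hr hk.ge) (pow_nonneg hr0.le N)
    rwa [mul_assoc, ← pow_add, add_comm k, ← hk] at hN
  · have hN := mul_le_mul_of_nonneg_right (mul_ratio_pow_le (k := k) hp hr c.le_succ)
      (pow_nonneg hr0.le (c + 1))
    rwa [mul_assoc, ← pow_add, add_comm k, ← hk] at hN

end MonotoneRatio

/-- The power sum `∑ i ∈ [1, m], x ^ i`, whose value at the saddle point of the generating function
of `permProb · m` is `n`. -/
noncomputable def powSum (m : ℕ) (x : ℝ) : ℝ :=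
  ∑ i ∈ Finset.Icc 1 m, x ^ i

section PermRatio

open Finset

/-- The ratio of consecutive permutation probabilities, a discrete stand-in for the saddle point. -/
noncomputable def permRatio (m n : ℕ) : ℝ :=
  permProb n m / permProb (n + 1) m

variable {m : ℕ}

lemma mul_permProb_eq_sum_Ico (n : ℕ) (hm : 1 ≤ m) :
    n * permProb n m = ∑ j ∈ Ico (n - m) n, permProb j m := by
  rw [mul_permProb n hm]
  refine sum_nbij' (n - ·) (n - ·) ?_ ?_ ?_ ?_ fun _ _ => rfl <;>
    simp only [mem_Icc, mem_Ico] <;> omega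

lemma succ_mul_permProb (n : ℕ) (hm : 1 ≤ m) :
    (n + 1) * permProb n m = ∑ j ∈ Ico (n - m) (n + 1), permProb j m := by
  rw [sum_Ico_succ_top (Nat.sub_le n m), ← mul_permProb_eq_sum_Ico n hm]
  ring

lemma succ_mul_permProb_sub (n : ℕ) (hm : 1 ≤ m) :
    (n + 1) * (permProb n m - permProb (n + 1) m) = if m ≤ n then permProb (n - m) m else 0 := by
  have hsucc := mul_permProb_eq_sum_Ico (n + 1) hm
  push_cast at hsucc
  rw [mul_sub, succ_mul_permProb n hm, hsucc]
  split_ifs with h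
  · rw [sum_eq_sum_Ico_succ_bot (by omega), Nat.sub_add_comm h, add_sub_cancel_right]
  · rw [Nat.sub_eq_zero_of_le (by omega), Nat.sub_eq_zero_of_le (by omega), sub_self]

lemma permProb_succ_le (n : ℕ) (hm : 1 ≤ m) : permProb (n + 1) m ≤ permProb n m := by
  have h : 0 ≤ (n + 1) * (permProb n m - permProb (n + 1) m) := by
    rw [succ_mul_permProb_sub n hm]
    split_ifs
    exacts [(permProb_pos _ _).le, le_rfl]
  exact sub_nonneg.1 (nonneg_of_mul_nonneg_right h (by positivity))

/-- One step of the log-concavity induction: the two sides of the inequality to be proved are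
window sums, compared term by term. -/
lemma permProb_mul_permProb_le_sq (n : ℕ) (hm : 1 ≤ m)
    (ih : ∀ k j, k ≤ j → j ≤ n →
      permProb k m * permProb (j + 1) m ≤ permProb (k + 1) m * permProb j m) :
    permProb n m * permProb (n + 2) m ≤ permProb (n + 1) m ^ 2 := by
  have diff := succ_mul_permProb_sub n hm
  have diff_succ := succ_mul_permProb_sub (n + 1) hm
  push_cast at diff_succ
  have window : (n + 2) * permProb (n + 1) m * (if m ≤ n then permProb (n - m) m else 0)
      ≤ (n + 1) * permProb n m * (if m ≤ n + 1 then permProb (n + 1 - m) m else 0) := by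
    split_ifs with h h'
    · have hsucc := succ_mul_permProb (n + 1) hm
      push_cast at hsucc
      rw [show (n : ℝ) + 2 = n + 1 + 1 by ring, hsucc, succ_mul_permProb n hm, Nat.sub_add_comm h,
        ← sum_Ico_add' (permProb · m), sum_mul, sum_mul]
      refine sum_le_sum fun j hj => ?_
      rw [mem_Ico] at hj
      rw [mul_comm, mul_comm (permProb j m)]
      exact ih _ _ hj.1 (by omega)
    · omega
    · have := permProb_pos n m
      have := permProb_pos (n + 1 - m) m
      rw [mul_zero]
      positivity
    · simp
  rw [← diff, ← diff_succ] at window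
  have hn : (0 : ℝ) < (n + 1) * (n + 2) := by positivity
  refine le_of_mul_le_mul_left ?_ hn
  linear_combination window

lemma permProb_mul_permProb_succ_le (hm : 1 ≤ m) {k j : ℕ} (hkj : k ≤ j) :
    permProb k m * permProb (j + 1) m ≤ permProb (k + 1) m * permProb j m := by
  induction j using Nat.strong_induction_on generalizing k with
  | _ j ih =>
    obtain rfl | hlt := hkj.eq_or_lt
    · rw [mul_comm]
    obtain ⟨n, rfl⟩ := Nat.exists_eq_add_of_le' (Nat.one_le_of_lt hlt)
    have sq := permProb_mul_permProb_le_sq n hm fun k j hkj hj => ih j (by omega) hkj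
    have prev := ih n n.lt_succ_self (Nat.lt_succ_iff.1 hlt)
    have hn := permProb_pos n m
    have hn1 := permProb_pos (n + 1) m
    refine le_of_mul_le_mul_left ?_ (mul_pos hn hn1)
    calc permProb n m * permProb (n + 1) m * (permProb k m * permProb (n + 2) m)
        = (permProb k m * permProb (n + 1) m) * (permProb n m * permProb (n + 2) m) := by ring
      _ ≤ (permProb (k + 1) m * permProb n m) * permProb (n + 1) m ^ 2 := by
          have := permProb_pos (n + 2) m
          have := permProb_pos (k + 1) m
          gcongr
      _ = _ := by ring

lemma monotone_permRatio (hm : 1 ≤ m) : Monotone (permRatio m) := fun k j hkj => by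
  rw [permRatio, permRatio, div_le_div_iff₀ (permProb_pos _ _) (permProb_pos _ _),
    mul_comm (permProb j m)]
  exact permProb_mul_permProb_succ_le hm hkj

lemma one_le_permRatio (n : ℕ) (hm : 1 ≤ m) : 1 ≤ permRatio m n :=
  (one_le_div (permProb_pos _ _)).2 (permProb_succ_le n hm)

lemma succ_le_powSum_permRatio (c : ℕ) (hm : 1 ≤ m) : c + 1 ≤ powSum m (permRatio m c) := by
  have hr := zero_le_one.trans (one_le_permRatio c hm)
  have hrec := mul_permProb (c + 1) hm
  push_cast at hrec
  refine le_of_mul_le_mul_right ?_ (permProb_pos (c + 1) m)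
  rw [hrec, powSum, sum_mul]
  refine (sum_le_sum fun i hi => ?_).trans (sum_le_sum_of_subset_of_nonneg
    (Icc_subset_Icc_right (min_le_right (c + 1) m)) fun i _ _ =>
      mul_nonneg (pow_nonneg hr i) (permProb_pos _ _).le)
  obtain ⟨N, hN⟩ := Nat.exists_eq_add_of_le' ((mem_Icc.1 hi).2.trans (min_le_left _ _))
  rw [hN, Nat.add_sub_cancel, mul_comm]
  exact le_mul_ratio_pow (p := (permProb · m)) (permProb_pos · m) (monotone_permRatio hm) hN.ge

lemma powSum_permRatio_le (c : ℕ) (hm : 1 ≤ m) : powSum m (permRatio m c) ≤ c + m := by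
  have hrec := mul_permProb (c + m) hm
  rw [min_eq_right (Nat.le_add_left m c)] at hrec
  push_cast at hrec
  refine le_of_mul_le_mul_right ?_ (permProb_pos (c + m) m)
  rw [hrec, powSum, sum_mul]
  refine sum_le_sum fun i hi => ?_
  have hi' := (mem_Icc.1 hi).2
  have h := mul_ratio_pow_le (p := (permProb · m)) (k := i) (permProb_pos · m)
    (monotone_permRatio hm) (show c ≤ c + m - i by omega)
  rwa [Nat.sub_add_cancel (by omega), mul_comm] at h

end PermRatio

/-! ### Power sums -/

section PowSum

open Finset

variable {m : ℕ} {u v x y : ℝ}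

lemma powSum_succ (m : ℕ) (x : ℝ) : powSum (m + 1) x = powSum m x + x ^ (m + 1) :=
  sum_Icc_succ_top (by omega) _

lemma powSum_nonneg (m : ℕ) (hx : 0 ≤ x) : 0 ≤ powSum m x :=
  sum_nonneg fun i _ => pow_nonneg hx i

lemma powSum_strictMonoOn (hm : 1 ≤ m) : StrictMonoOn (powSum m) (Set.Ici 0) := fun u hu v _ huv =>
  sum_lt_sum_of_nonempty ⟨1, by simp [hm]⟩ fun i hi =>
    pow_lt_pow_left₀ huv hu (Nat.one_le_iff_ne_zero.1 (mem_Icc.1 hi).1)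

lemma pow_le_powSum (hm : 1 ≤ m) (hx : 0 ≤ x) : x ^ m ≤ powSum m x :=
  single_le_sum (f := fun i => x ^ i) (fun i _ => pow_nonneg hx i) (by simp [hm])

lemma powSum_le_mul_pow (m : ℕ) (hx : 1 ≤ x) : powSum m x ≤ m * x ^ m := by
  simpa [powSum] using sum_le_card_nsmul (Icc 1 m) (fun i => x ^ i) (x ^ m) fun i hi =>
    pow_le_pow_right₀ hx (mem_Icc.1 hi).2

lemma powSum_le_four_mul_pow (m : ℕ) (hx : 4 / 3 ≤ x) : powSum m x ≤ 4 * x ^ m := by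
  induction m with
  | zero => simp [powSum]
  | succ m ih =>
    have hxm : 0 < x ^ m := by positivity
    rw [powSum_succ, pow_succ]
    nlinarith

lemma powSum_mul_pow_le (m : ℕ) (hy : 0 ≤ y) (hyx : y ≤ x) :
    powSum m x * y ^ m ≤ x ^ m * powSum m y := by
  rw [powSum, powSum, sum_mul, mul_sum]
  refine sum_le_sum fun i hi => ?_
  obtain ⟨k, rfl⟩ := Nat.exists_eq_add_of_le (mem_Icc.1 hi).2
  have hx : 0 ≤ x := hy.trans hyx
  calc x ^ i * y ^ (i + k) = x ^ i * y ^ i * y ^ k := by ring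
    _ ≤ x ^ i * y ^ i * x ^ k := by gcongr
    _ = x ^ (i + k) * y ^ i := by ring

/-- Chebyshev's inequality for the monotone sequences `i` and `u ^ i`. -/
lemma succ_mul_powSum_le (m : ℕ) (hu : 1 ≤ u) :
    (m + 1) * powSum m u ≤ 2 * ∑ i ∈ Icc 1 m, i * u ^ i := by
  induction m with
  | zero => simp [powSum]
  | succ m ih =>
    have h : powSum m u ≤ m * u ^ (m + 1) := (powSum_le_mul_pow m hu).trans (by gcongr; omega)
    rw [powSum_succ, sum_Icc_succ_top (by omega)]
    push_cast
    linarith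

lemma mul_sub_mul_powSum_le (m : ℕ) (hu : 1 ≤ u) (huv : u ≤ v) :
    m * (v - u) * powSum m u ≤ 2 * u * (powSum m v - powSum m u) := by
  have hu0 : 0 < u := one_pos.trans_le hu
  have bernoulli (i : ℕ) : (v - u) * (i * u ^ i) ≤ u * (v ^ i - u ^ i) := by
    have h := one_add_mul_le_pow (show -2 ≤ v / u - 1 by
      have : 0 ≤ v / u := div_nonneg (hu0.le.trans huv) hu0.le
      linarith) i
    rw [add_sub_cancel, div_pow, le_div_iff₀ (by positivity)] at h
    calc (v - u) * (i * u ^ i) = u * ((1 + i * (v / u - 1)) * u ^ i - u ^ i) := by field_simp; ring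
      _ ≤ u * (v ^ i - u ^ i) := by gcongr
  have sum_bernoulli : (v - u) * ∑ i ∈ Icc 1 m, i * u ^ i ≤ u * (powSum m v - powSum m u) := by
    rw [powSum, powSum, ← sum_sub_distrib, mul_sum, mul_sum]
    exact sum_le_sum fun i _ => bernoulli i
  have chebyshev := mul_le_mul_of_nonneg_left (succ_mul_powSum_le m hu) (sub_nonneg.2 huv)
  have := mul_nonneg (sub_nonneg.2 huv) (powSum_nonneg m hu0.le)
  linarith

/-- `powSum m` grows at least like `u ^ (m / 2)`, which turns closeness of its values into relative
closeness of the arguments. -/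
lemma le_mul_exp_of_powSum_le {n d : ℝ} (hm : 1 ≤ m) (hn : 0 < n) (hd : 0 ≤ d) (hu : 1 ≤ u)
    (hnu : n / 2 ≤ powSum m u) (huv : powSum m v ≤ powSum m u + d) :
    v ≤ u * exp (4 * d / (n * m)) := by
  have hu0 : 0 < u := one_pos.trans_le hu
  have hm0 : (0 : ℝ) < m := by exact_mod_cast hm
  suffices h : v - u ≤ u * (4 * d / (n * m)) by
    have := mul_le_mul_of_nonneg_left (add_one_le_exp (4 * d / (n * m))) hu0.le
    linarith
  obtain h | h := le_total v u
  · exact (sub_nonpos.2 h).trans (by positivity)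
  rw [mul_div_assoc', le_div_iff₀ (by positivity)]
  have lower : m * (v - u) * (n / 2) ≤ m * (v - u) * powSum m u :=
    mul_le_mul_of_nonneg_left hnu (mul_nonneg hm0.le (sub_nonneg.2 h))
  have upper : 2 * u * (powSum m v - powSum m u) ≤ 2 * u * d := by
    gcongr
    linarith
  linarith [mul_sub_mul_powSum_le m hu h]

end PowSum

/-! ### Upper bound at the saddle point -/

section UpperBound

open Finset

variable {F : Type} [Field F] [Fintype F] {m : ℕ}

/-- Rankin's trick, with the peak of `p * y ^ ·` in place of the sum. -/
lemma polyProb_mul_permRatio_pow_le (n c : ℕ) (hm : 1 ≤ m)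
    (hyq : permRatio m c < Fintype.card F) :
    polyProb F n m * permRatio m c ^ n
      ≤ permProb (c + 1) m * permRatio m c ^ (c + 1) * Gq F m (permRatio m c) := by
  have hy : 0 ≤ permRatio m c := zero_le_one.trans (one_le_permRatio c hm)
  have peak (N : ℕ) : permProb N m * permRatio m c ^ N
      ≤ permProb (c + 1) m * permRatio m c ^ (c + 1) :=
    mul_ratio_pow_le_peak (p := (permProb · m)) (permProb_pos · m) (monotone_permRatio hm)
  have h0 := (mul_nonneg (permProb_pos 0 m).le (pow_nonneg hy 0)).trans (peak 0)
  refine le_trans ?_ (mul_le_mul_of_nonneg_left (sum_le_hasSum (range (n + 1)) (fun k _ =>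
    mul_nonneg (gqCoeff_nonneg m k) (pow_nonneg hy k)) (hasSum_gqCoeff hy hyq)) h0)
  rw [polyProb_eq_sum n hm, sum_mul, mul_sum]
  refine sum_le_sum fun k hk => ?_
  obtain ⟨N, rfl⟩ := Nat.exists_eq_add_of_le (Nat.lt_succ_iff.1 (mem_range.1 hk))
  rw [Nat.add_sub_cancel_left, pow_add, mul_comm (permProb (c + 1) m * _)]
  calc gqCoeff F m k * permProb N m * (permRatio m c ^ k * permRatio m c ^ N)
      = gqCoeff F m k * permRatio m c ^ k * (permProb N m * permRatio m c ^ N) := by ring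
    _ ≤ _ := mul_le_mul_of_nonneg_left (peak N) (mul_nonneg (gqCoeff_nonneg m k) (pow_nonneg hy k))

lemma permProb_le_mul_permRatio_pow {c t : ℕ} (hm : 1 ≤ m) (ht : t ≤ c + 1) :
    permProb (c + 1) m ≤ permProb (c + 1 + t) m *
      (permRatio m c ^ t * exp (4 * t * (t + m) / ((c + 1 + t) * m))) := by
  have hc := succ_le_powSum_permRatio c hm
  have htc : (t : ℝ) ≤ c + 1 := by exact_mod_cast ht
  have ratio_le : permRatio m (c + t)
      ≤ permRatio m c * exp (4 * (t + m) / ((c + 1 + t) * m)) := by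
    refine le_mul_exp_of_powSum_le hm (by positivity) (by positivity) (one_le_permRatio c hm)
      (by linarith) ((powSum_permRatio_le (c + t) hm).trans ?_)
    push_cast
    linarith
  have h0 := zero_le_one.trans (one_le_permRatio (c + t) hm)
  calc permProb (c + 1) m ≤ permProb (c + 1 + t) m * permRatio m (c + t) ^ t :=
        le_mul_ratio_pow (p := (permProb · m)) (permProb_pos · m) (monotone_permRatio hm)
          (by omega)
    _ ≤ permProb (c + 1 + t) m * (permRatio m c * exp (4 * (t + m) / ((c + 1 + t) * m))) ^ t := by
        have := permProb_pos (c + 1 + t) m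
        gcongr
    _ = _ := by
        rw [mul_pow, ← exp_nat_mul]
        congr 3
        ring

/-- Only the term `j = 2 * m` of `log G` is kept. -/
lemma Gq_le_mul_exp_neg_pow_sub {x y : ℝ} (hm : 1 ≤ m) (hy : 0 ≤ y) (hyx : y ≤ x)
    (hxq : x < Fintype.card F) :
    Gq F m y ≤ Gq F m x *
      exp (-((x ^ (2 * m) - y ^ (2 * m)) / ((Fintype.card F : ℝ) ^ m * (2 * m)))) := by
  rw [Gq_eq_exp_tsum hy (hyx.trans_lt hxq), Gq_eq_exp_tsum (hy.trans hyx) hxq, ← exp_add,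
    exp_le_exp]
  have hpow (j : ℕ) : 0 ≤ x ^ j - y ^ j := sub_nonneg.2 (pow_le_pow_left₀ hy hyx j)
  have hx := (hasSum_gqLogCoeff (m := m) (hy.trans hyx) hxq).summable
  have hy := (hasSum_gqLogCoeff (m := m) hy (hyx.trans_lt hxq)).summable
  have le_tsum := (hx.sub hy).le_tsum (2 * m) fun j _ => by
    rw [← sub_div, ← mul_sub]
    exact div_nonneg (mul_nonneg (gqLogCoeff_nonneg m j) (hpow j)) j.cast_nonneg
  rw [hx.tsum_sub hy, ← sub_div, ← mul_sub] at le_tsum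
  have coeff_le : (x ^ (2 * m) - y ^ (2 * m)) / ((Fintype.card F : ℝ) ^ m * (2 * m))
      ≤ gqLogCoeff F m (2 * m) * (x ^ (2 * m) - y ^ (2 * m)) / ((2 * m : ℕ) : ℝ) := by
    rw [← div_div, div_eq_inv_mul (_ - _)]
    push_cast
    have := inv_card_pow_le_gqLogCoeff_two_mul (F := F) hm
    have := hpow (2 * m)
    gcongr
  linarith

lemma Gq_le_mul_exp_neg_of_powSum_le {x y d : ℝ} (hm : 1 ≤ m) (hx : 0 ≤ x) (hy : 0 ≤ y)
    (hxq : x < Fintype.card F) (hxm : powSum m x ≤ 4 * x ^ m) (hd : 0 ≤ d)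
    (hyx : powSum m y ≤ powSum m x - d) :
    Gq F m y ≤ Gq F m x *
      exp (-(powSum m x * d / (32 * (m * (Fintype.card F : ℝ) ^ m)))) := by
  have hle : y ≤ x := (powSum_strictMonoOn hm).le_iff_le hy hx |>.1 (by linarith)
  have pow_le : y ^ m * powSum m x ≤ x ^ m * (powSum m x - d) :=
    calc y ^ m * powSum m x = powSum m x * y ^ m := mul_comm _ _
      _ ≤ x ^ m * powSum m y := powSum_mul_pow_le m hy hle
      _ ≤ x ^ m * (powSum m x - d) := by gcongr
  have pow_gap : powSum m x * d / 16 ≤ x ^ (2 * m) - y ^ (2 * m) := by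
    have hle_m : y ^ m ≤ x ^ m := pow_le_pow_left₀ hy hle m
    have hym : 0 ≤ y ^ m := pow_nonneg hy m
    have hgap : x ^ m * d ≤ 4 * x ^ m * (x ^ m - y ^ m) := by
      calc x ^ m * d ≤ powSum m x * (x ^ m - y ^ m) := by linarith
        _ ≤ _ := mul_le_mul_of_nonneg_right hxm (sub_nonneg.2 hle_m)
    have hSd : powSum m x * d ≤ 4 * x ^ m * d := by gcongr
    rw [mul_comm 2 m, pow_mul, pow_mul]
    nlinarith
  refine (Gq_le_mul_exp_neg_pow_sub hm hy hle hxq).trans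
    (mul_le_mul_of_nonneg_left (exp_le_exp.2 (neg_le_neg ?_)) (Gq_pos hx hxq).le)
  calc powSum m x * d / (32 * (m * (Fintype.card F : ℝ) ^ m))
      = powSum m x * d / 16 / ((Fintype.card F : ℝ) ^ m * (2 * m)) := by ring
    _ ≤ _ := by gcongr

lemma permProb_le_mul_permRatio_pow_mul_exp {c t : ℕ} {Q : ℝ} (hm : 1 ≤ m) (htc : t ≤ c + 1)
    (ht : 2 * m ≤ t) (hQ : 0 < Q) (htQ : 768 * t ≤ ((c + 1 + t : ℕ) : ℝ) ^ 2 / Q) :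
    permProb (c + 1) m ≤ permProb (c + 1 + t) m *
      (permRatio m c ^ t * exp ((c + 1 + t : ℕ) * t / (128 * (m * Q)))) := by
  set n := c + 1 + t with hn
  have hnc : (n : ℝ) = c + 1 + t := by exact_mod_cast hn
  have htm : 2 * (m : ℝ) ≤ t := by exact_mod_cast ht
  have hm0 : (0 : ℝ) < m := by exact_mod_cast hm
  have hn0 : (0 : ℝ) < n := by rw [hnc]; positivity
  have exponent_le : 4 * t * (t + m) / (n * m) ≤ n * t / (128 * (m * Q)) := by
    rw [le_div_iff₀ hQ] at htQ
    rw [div_le_div_iff₀ (by positivity) (by positivity)]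
    calc 4 * t * (t + m) * (128 * (m * Q))
        ≤ 4 * t * (t + t / 2) * (128 * (m * Q)) := by gcongr; linarith
      _ = t * m * (768 * t * Q) := by ring
      _ ≤ t * m * n ^ 2 := by gcongr
      _ = n * t * (n * m) := by ring
  have le_mul := permProb_le_mul_permRatio_pow (c := c) (t := t) hm htc
  rw [← hnc, ← hn] at le_mul
  have := permProb_pos n m
  have := one_le_permRatio c hm
  exact le_mul.trans (by gcongr)

/-- Any shift `t` of the order of `n² / q ^ m` may be used; the saddle point `x` of `n` is compared
with the ratio at `n - 1 - t`. -/
theorem polyProb_div_permProb_le {n t : ℕ} {x : ℝ} (hm : 1 ≤ m) (hx : 0 ≤ x)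
    (hxq : x < Fintype.card F) (hxn : powSum m x = n) (hxm : n ≤ 4 * x ^ m) (ht : 2 * m ≤ t)
    (htn : 2 * t ≤ n) (htM : 768 * t ≤ (n : ℝ) ^ 2 / (Fintype.card F : ℝ) ^ m) :
    polyProb F n m / permProb n m
      ≤ Gq F m x * exp (-(n * t / (128 * (m * (Fintype.card F : ℝ) ^ m)))) := by
  obtain ⟨c, hc⟩ : ∃ c, n = c + 1 + t := ⟨n - t - 1, by omega⟩
  have hnc : (n : ℝ) = c + 1 + t := by exact_mod_cast hc
  have hq : (0 : ℝ) < (Fintype.card F : ℝ) ^ m := by positivity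
  set y := permRatio m c
  set E := n * t / (128 * (m * (Fintype.card F : ℝ) ^ m)) with hE
  have hy : 0 < y := zero_lt_one.trans_le (one_le_permRatio c hm)
  have hyn : powSum m y ≤ powSum m x - t / 2 := by
    have htm : 2 * (m : ℝ) ≤ t := by exact_mod_cast ht
    linarith [powSum_permRatio_le c hm]
  have hyx : y ≤ x :=
    (powSum_strictMonoOn hm).le_iff_le hy.le hx |>.1 (hyn.trans (by linarith))
  have Gq_le : Gq F m y ≤ Gq F m x * exp (-(2 * E)) := by
    convert! Gq_le_mul_exp_neg_of_powSum_le hm hx hy.le hxq (hxn.trans_le hxm) (by positivity) hyn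
      using 4
    rw [hE, hxn]
    ring
  have permProb_le : permProb (c + 1) m ≤ permProb n m * (y ^ t * exp E) := by
    subst hc
    exact permProb_le_mul_permRatio_pow_mul_exp hm (by omega) ht hq htM
  rw [div_le_iff₀ (permProb_pos n m)]
  refine le_of_mul_le_mul_right ?_ (pow_pos hy n)
  calc polyProb F n m * y ^ n ≤ permProb (c + 1) m * y ^ (c + 1) * Gq F m y :=
        polyProb_mul_permRatio_pow_le n c hm (hyx.trans_lt hxq)
    _ ≤ permProb n m * (y ^ t * exp E) * y ^ (c + 1) * (Gq F m x * exp (-(2 * E))) := by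
        have := permProb_pos n m
        have := (Gq_pos (m := m) hy.le (hyx.trans_lt hxq)).le
        gcongr
    _ = Gq F m x * exp (-E) * permProb n m * y ^ n := by
        rw [show -E = E + -(2 * E) by ring, exp_add, hc]
        ring

end UpperBound

/-! ### Lower bound at the saddle point -/

section LowerBound

open Finset

variable {F : Type} [Field F] [Fintype F] {m : ℕ}

lemma summable_gqLogCoeff_mul_pow {y : ℝ} (hy : 0 ≤ y) (hyq : y < Fintype.card F) :
    Summable fun j => gqLogCoeff F m j * y ^ j := by
  have hq : (0 : ℝ) < Fintype.card F := hy.trans_lt hyq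
  have hq1 : (1 : ℝ) ≤ Fintype.card F := by exact_mod_cast Fintype.card_pos
  have geom := summable_geometric_of_lt_one (div_nonneg hy hq.le) ((div_lt_one hq).2 hyq)
  refine (geom.mul_left (2 * (Fintype.card F : ℝ) ^ m)).of_nonneg_of_le
    (fun j => mul_nonneg (gqLogCoeff_nonneg m j) (pow_nonneg hy j)) fun j => ?_
  calc gqLogCoeff F m j * y ^ j
      ≤ 2 * (Fintype.card F : ℝ) ^ min m (j / 2) / (Fintype.card F : ℝ) ^ j * y ^ j := by
        gcongr
        exact gqLogCoeff_le m j
    _ ≤ 2 * (Fintype.card F : ℝ) ^ m / (Fintype.card F : ℝ) ^ j * y ^ j := by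
        gcongr
        exact min_le_left _ _
    _ = 2 * (Fintype.card F : ℝ) ^ m * (y / Fintype.card F) ^ j := by ring

lemma gqLogCoeff_mul_pow_le_of_lt {y τ : ℝ} {j : ℕ} (hy : 0 < y)
    (hqy : √(Fintype.card F) ≤ τ * y) (hj : j < 2 * m) :
    gqLogCoeff F m j * y ^ j
      ≤ 2 * (y ^ (2 * m) / (Fintype.card F : ℝ) ^ m) * τ ^ (2 * m - j) := by
  set g := √(Fintype.card F : ℝ)
  have hg : 1 ≤ g := one_le_sqrt.2 (by exact_mod_cast Fintype.card_pos)
  have hgq : g ^ 2 = Fintype.card F := sq_sqrt (by positivity)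
  have one_le : 1 ≤ τ * (y / g) := by
    rwa [← mul_div_assoc, one_le_div (by positivity)]
  calc gqLogCoeff F m j * y ^ j
      ≤ 2 * (g ^ 2) ^ min m (j / 2) / (g ^ 2) ^ j * y ^ j := by
        rw [hgq]
        gcongr
        exact gqLogCoeff_le m j
    _ ≤ 2 * g ^ j / (g ^ 2) ^ j * y ^ j := by
        rw [← pow_mul g 2 (min _ _)]
        gcongr
        omega
    _ = 2 * (y / g) ^ j * 1 := by
        rw [div_pow]
        field_simp
        ring
    _ ≤ 2 * (y / g) ^ j * (τ * (y / g)) ^ (2 * m - j) := by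
        gcongr
        exact one_le_pow₀ one_le
    _ = 2 * ((y / g) ^ j * (y / g) ^ (2 * m - j)) * τ ^ (2 * m - j) := by ring
    _ = _ := by rw [← pow_add, Nat.add_sub_cancel' hj.le, div_pow, pow_mul g, hgq]

lemma gqLogCoeff_mul_pow_add_two_mul_le {y τ : ℝ} (hy : 0 ≤ y)
    (hyq : y ≤ τ * Fintype.card F) (j : ℕ) :
    gqLogCoeff F m (j + 2 * m) * y ^ (j + 2 * m)
      ≤ 2 * (y ^ (2 * m) / (Fintype.card F : ℝ) ^ m) * τ ^ j := by
  have hq : (0 : ℝ) < Fintype.card F := by positivity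
  have le_tau : y / Fintype.card F ≤ τ := by rwa [div_le_iff₀ hq]
  have coeff_le := gqLogCoeff_le (F := F) m (j + 2 * m)
  rw [min_eq_left (by omega)] at coeff_le
  calc gqLogCoeff F m (j + 2 * m) * y ^ (j + 2 * m)
      ≤ 2 * (Fintype.card F : ℝ) ^ m / (Fintype.card F : ℝ) ^ (j + 2 * m) * y ^ (j + 2 * m) := by
        gcongr
    _ = 2 * (y ^ (2 * m) / (Fintype.card F : ℝ) ^ m) * (y / Fintype.card F) ^ j := by
        rw [div_pow]
        field_simp
        ring
    _ ≤ _ := by gcongr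

/-- Between `√q` and `q` the terms decay geometrically on both sides of `j = 2 * m`. -/
lemma tsum_gqLogCoeff_mul_pow_le {y τ : ℝ} (hy : 0 < y) (hτ : 0 ≤ τ) (hτ1 : τ < 1)
    (hyq : y ≤ τ * Fintype.card F) (hqy : √(Fintype.card F) ≤ τ * y) :
    ∑' j, gqLogCoeff F m j * y ^ j
      ≤ 4 / (1 - τ) * (y ^ (2 * m) / (Fintype.card F : ℝ) ^ m) := by
  have hq : (0 : ℝ) < Fintype.card F := by positivity
  have summable := summable_gqLogCoeff_mul_pow (m := m) hy.le
    (hyq.trans_lt (mul_lt_of_lt_one_left hq hτ1))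
  have geom := hasSum_geometric_of_lt_one hτ hτ1
  set W := y ^ (2 * m) / (Fintype.card F : ℝ) ^ m
  have hW : 0 ≤ 2 * W := by positivity
  have head : ∑ j ∈ range (2 * m), gqLogCoeff F m j * y ^ j ≤ 2 * W * (1 - τ)⁻¹ := by
    calc ∑ j ∈ range (2 * m), gqLogCoeff F m j * y ^ j
        ≤ ∑ j ∈ range (2 * m), 2 * W * τ ^ (2 * m - 1 - j) := sum_le_sum fun j hj =>
          (gqLogCoeff_mul_pow_le_of_lt hy hqy (mem_range.1 hj)).trans
            (mul_le_mul_of_nonneg_left (pow_le_pow_of_le_one hτ hτ1.le (by omega)) hW)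
      _ = 2 * W * ∑ i ∈ range (2 * m), τ ^ i := by
          rw [sum_range_reflect (fun i => 2 * W * τ ^ i), mul_sum]
      _ ≤ _ := mul_le_mul_of_nonneg_left (sum_le_hasSum _ (fun i _ => pow_nonneg hτ i) geom) hW
  have tail : ∑' j, gqLogCoeff F m (j + 2 * m) * y ^ (j + 2 * m) ≤ 2 * W * (1 - τ)⁻¹ :=
    hasSum_le (gqLogCoeff_mul_pow_add_two_mul_le hy.le hyq)
      ((summable_nat_add_iff (2 * m)).2 summable).hasSum (geom.mul_left (2 * W))
  rw [← summable.sum_add_tsum_nat_add (2 * m), div_mul_eq_mul_div, div_eq_mul_inv]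
  linarith

lemma Gq_mul_exp_le {x s A : ℝ} (hx : 0 ≤ x) (hs : 0 ≤ s) (hyq : x * exp s < Fintype.card F)
    (hA : ∑' j, gqLogCoeff F m j * (x * exp s) ^ j ≤ A) :
    Gq F m (x * exp s) ≤ Gq F m x * exp (s * A) := by
  have hy : 0 ≤ x * exp s := by positivity
  have hxq : x < Fintype.card F := (le_mul_of_one_le_right hx (one_le_exp hs)).trans_lt hyq
  rw [Gq_eq_exp_tsum hy hyq, Gq_eq_exp_tsum hx hxq, ← exp_add, exp_le_exp]
  have sum_x := (hasSum_gqLogCoeff (m := m) hx hxq).summable.hasSum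
  have sum_y := (hasSum_gqLogCoeff (m := m) hy hyq).summable.hasSum
  have sum_A := (summable_gqLogCoeff_mul_pow (m := m) hy hyq).hasSum.mul_left s
  refine (hasSum_le (fun j => ?_) sum_y (sum_x.add sum_A)).trans (by gcongr)
  have hterm : 0 ≤ gqLogCoeff F m j * (x * exp s) ^ j :=
    mul_nonneg (gqLogCoeff_nonneg m j) (pow_nonneg hy j)
  obtain rfl | hj := Nat.eq_zero_or_pos j
  · simpa using mul_nonneg hs hterm
  have hpow : x ^ j = (x * exp s) ^ j * exp (-(j * s)) := by
    rw [mul_pow, ← exp_nat_mul, mul_assoc, ← exp_add, add_neg_cancel, exp_zero, mul_one]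
  have key := mul_le_mul_of_nonneg_left (add_one_le_exp (-(j * s)))
    (div_nonneg hterm j.cast_nonneg)
  rw [hpow]
  calc gqLogCoeff F m j * (x * exp s) ^ j / j
      = gqLogCoeff F m j * (x * exp s) ^ j / j * (-(j * s) + 1)
        + s * (gqLogCoeff F m j * (x * exp s) ^ j) := by field_simp; ring
    _ ≤ gqLogCoeff F m j * (x * exp s) ^ j / j * exp (-(j * s))
        + s * (gqLogCoeff F m j * (x * exp s) ^ j) := by gcongr
    _ = _ := by ring

/-- Rankin's trick for the tail of the power series of `Gq`. -/
lemma Gq_le_sum_range_add {x s : ℝ} (hx : 0 ≤ x) (hs : 0 ≤ s)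
    (hyq : x * exp s < Fintype.card F) (K : ℕ) :
    Gq F m x ≤ ∑ k ∈ range K, gqCoeff F m k * x ^ k + exp (-(s * K)) * Gq F m (x * exp s) := by
  have hy : 0 ≤ x * exp s := by positivity
  have sum_x := hasSum_gqCoeff (m := m) hx
    ((le_mul_of_one_le_right hx (one_le_exp hs)).trans_lt hyq)
  have sum_y := (hasSum_gqCoeff (m := m) hy hyq).mul_left (exp (-(s * K)))
  have term_nonneg (k : ℕ) : 0 ≤ exp (-(s * K)) * (gqCoeff F m k * (x * exp s) ^ k) := by
    have := gqCoeff_nonneg (F := F) m k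
    positivity
  rw [← sum_x.tsum_eq, ← sum_x.summable.sum_add_tsum_nat_add K, add_le_add_iff_left]
  refine (Summable.tsum_le_tsum (fun k => ?_) ((summable_nat_add_iff K).2 sum_x.summable)
    ((summable_nat_add_iff K).2 sum_y.summable)).trans ?_
  · have hexp : 1 ≤ exp (-(s * K)) * exp s ^ (k + K) := by
      rw [← exp_nat_mul, ← exp_add]
      refine one_le_exp ?_
      push_cast
      linarith [mul_nonneg k.cast_nonneg hs]
    have := mul_nonneg (gqCoeff_nonneg (F := F) m (k + K)) (pow_nonneg hx (k + K))
    calc gqCoeff F m (k + K) * x ^ (k + K)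
        ≤ gqCoeff F m (k + K) * x ^ (k + K) * (exp (-(s * K)) * exp s ^ (k + K)) :=
          le_mul_of_one_le_right this hexp
      _ = _ := by ring
  · rw [← sum_y.tsum_eq, ← sum_y.summable.sum_add_tsum_nat_add K]
    exact le_add_of_nonneg_left (sum_nonneg fun k _ => term_nonneg k)

lemma mul_Gq_le_sum_range {x s A : ℝ} {K : ℕ} (hx : 0 ≤ x) (hs : 0 ≤ s)
    (hyq : x * exp s < Fintype.card F)
    (hA : ∑' j, gqLogCoeff F m j * (x * exp s) ^ j ≤ A) (hK : 2 * A ≤ K) :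
    (1 - exp (-(s * A))) * Gq F m x ≤ ∑ k ∈ range K, gqCoeff F m k * x ^ k := by
  have tail_le : exp (-(s * K)) * Gq F m (x * exp s) ≤ exp (-(s * A)) * Gq F m x :=
    calc exp (-(s * K)) * Gq F m (x * exp s)
        ≤ exp (-(s * (2 * A))) * (Gq F m x * exp (s * A)) := by
          have := (Gq_pos (m := m) (mul_nonneg hx (exp_pos s).le) hyq).le
          have := Gq_mul_exp_le hx hs hyq hA
          gcongr
      _ = exp (-(s * A)) * Gq F m x := by
          rw [show -(s * A) = -(s * (2 * A)) + s * A by ring, exp_add]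
          ring
  linarith [Gq_le_sum_range_add (m := m) hx hs hyq K]

lemma permProb_mul_pow_le {n K k : ℕ} {x : ℝ} (hm : 1 ≤ m) (hn : 1 ≤ n) (hx : 0 ≤ x)
    (hxn : powSum m x = n) (hK : 2 * K ≤ n) (hk : k ≤ K) :
    permProb n m * (x * exp (-(4 * K / (n * m)))) ^ k ≤ permProb (n - k) m := by
  obtain ⟨c, hc⟩ : ∃ c, n = c + 1 + K := ⟨n - K - 1, by omega⟩
  have hnc : (n : ℝ) = c + 1 + K := by exact_mod_cast hc
  have hKn : 2 * (K : ℝ) ≤ n := by exact_mod_cast hK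
  have hn0 : (0 : ℝ) < n := by exact_mod_cast hn
  have powSum_le := succ_le_powSum_permRatio c hm
  have x_le : x ≤ permRatio m c * exp (4 * K / (n * m)) :=
    le_mul_exp_of_powSum_le hm hn0 K.cast_nonneg (one_le_permRatio c hm) (by linarith)
      (by linarith)
  have hp := permProb_pos n m
  calc permProb n m * (x * exp (-(4 * K / (n * m)))) ^ k
      ≤ permProb n m * permRatio m c ^ k := by
        gcongr
        rwa [exp_neg, ← div_eq_mul_inv, div_le_iff₀ (exp_pos _)]
    _ = permProb (n - k + k) m * permRatio m c ^ k := by rw [Nat.sub_add_cancel (by omega)]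
    _ ≤ permProb (n - k) m := mul_ratio_pow_le (p := (permProb · m)) (permProb_pos · m)
        (monotone_permRatio hm) (by omega)

lemma exp_neg_mul_sum_range_le {n K : ℕ} {x : ℝ} (hm : 1 ≤ m) (hn : 1 ≤ n) (hx : 0 ≤ x)
    (hxn : powSum m x = n) (hK : 2 * K ≤ n) :
    exp (-(4 * K ^ 2 / (n * m))) * ∑ k ∈ range (K + 1), gqCoeff F m k * x ^ k
      ≤ polyProb F n m / permProb n m := by
  rw [le_div_iff₀ (permProb_pos n m), polyProb_eq_sum n hm, mul_sum, sum_mul]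
  refine (sum_le_sum fun k hk => ?_).trans (sum_le_sum_of_subset_of_nonneg
    (range_subset_range.2 (by omega : K + 1 ≤ n + 1)) fun k _ _ =>
      mul_nonneg (gqCoeff_nonneg m k) (permProb_pos _ m).le)
  have hkK : k ≤ K := Nat.lt_succ_iff.1 (mem_range.1 hk)
  have exp_le : exp (-(4 * K ^ 2 / (n * m))) ≤ exp (-(4 * K / (n * m))) ^ k := by
    rw [← exp_nat_mul, exp_le_exp, mul_neg, neg_le_neg_iff]
    calc (k : ℝ) * (4 * K / (n * m)) ≤ K * (4 * K / (n * m)) := by gcongr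
      _ = 4 * K ^ 2 / (n * m) := by ring
  have hg := gqCoeff_nonneg (F := F) m k
  have hp := permProb_pos n m
  calc exp (-(4 * K ^ 2 / (n * m))) * (gqCoeff F m k * x ^ k) * permProb n m
      ≤ exp (-(4 * K / (n * m))) ^ k * (gqCoeff F m k * x ^ k) * permProb n m := by gcongr
    _ = gqCoeff F m k * (permProb n m * (x * exp (-(4 * K / (n * m)))) ^ k) := by ring
    _ ≤ _ := mul_le_mul_of_nonneg_left (permProb_mul_pow_le hm hn hx hxn hK hkK) hg

theorem mul_Gq_mul_exp_neg_le_polyProb_div_permProb {n K : ℕ} {x s A : ℝ} (hm : 1 ≤ m)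
    (hn : 1 ≤ n) (hx : 0 ≤ x) (hxn : powSum m x = n) (hs : 0 ≤ s)
    (hyq : x * exp s < Fintype.card F)
    (hA : ∑' j, gqLogCoeff F m j * (x * exp s) ^ j ≤ A) (hAK : 2 * A ≤ K + 1)
    (hK : 2 * K ≤ n) :
    (1 - exp (-(s * A))) * Gq F m x * exp (-(4 * K ^ 2 / (n * m)))
      ≤ polyProb F n m / permProb n m := by
  refine le_trans ?_ (exp_neg_mul_sum_range_le hm hn hx hxn hK)
  rw [mul_comm]
  gcongr
  exact mul_Gq_le_sum_range hx hs hyq hA (by exact_mod_cast hAK)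

end LowerBound

/-! ### Asymptotics in the range of the theorem -/

section Asymptotics

open Filter Finset

/-- The condition `(1 + ε) * log n / log q ≤ m ≤ (2 - ε) * log n / log q`, with the denominators
cleared. -/
structure InLogRange (q ε : ℝ) (n m : ℕ) : Prop where
  lower : (1 + ε) * log n ≤ m * log q
  upper : m * log q ≤ (2 - ε) * log n

variable {q ε : ℝ} {n m : ℕ} {x : ℝ}

lemma InLogRange.rpow_le_sq_div_pow (h : InLogRange q ε n m) (hq : 0 < q) (hn : 1 ≤ n) :
    (n : ℝ) ^ ε ≤ n ^ 2 / q ^ m := by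
  have hn0 : (0 : ℝ) < n := by exact_mod_cast hn
  rw [le_div_iff₀ (by positivity), ← log_le_log_iff (by positivity) (by positivity),
    log_mul (by positivity) (by positivity), log_rpow hn0, log_pow, log_pow]
  push_cast
  linarith [h.upper]

lemma InLogRange.sq_div_pow_mul_rpow_le (h : InLogRange q ε n m) (hq : 0 < q) (hn : 1 ≤ n) :
    (n : ℝ) ^ 2 / q ^ m * n ^ ε ≤ n := by
  have hn0 : (0 : ℝ) < n := by exact_mod_cast hn
  rw [div_mul_eq_mul_div, div_le_iff₀ (by positivity),
    ← log_le_log_iff (by positivity) (by positivity), log_mul (by positivity) (by positivity),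
    log_mul (by positivity) (by positivity), log_rpow hn0, log_pow, log_pow]
  push_cast
  linarith [h.lower]

lemma eventually_le_of_inLogRange (hq : 1 < q) (hε : 0 ≤ ε) (K : ℝ) :
    ∀ᶠ n : ℕ in atTop, ∀ m, InLogRange q ε n m → K ≤ m := by
  filter_upwards [(tendsto_log_atTop.comp tendsto_natCast_atTop_atTop).eventually_ge_atTop
    (K * log q), eventually_ge_atTop 1] with n hK hn m h
  have hlogn : 0 ≤ log n := log_nonneg (by exact_mod_cast hn)
  refine le_of_mul_le_mul_right ?_ (log_pos hq)
  calc K * log q ≤ log n := hK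
    _ ≤ (1 + ε) * log n := le_mul_of_one_le_left hlogn (by linarith)
    _ ≤ m * log q := h.lower

lemma eventually_mul_le_rpow_of_inLogRange {a : ℝ} (hq : 1 < q) (hε : 0 ≤ ε) (ha : 0 < a)
    (K : ℝ) : ∀ᶠ n : ℕ in atTop, ∀ m, InLogRange q ε n m → K * m ≤ (n : ℝ) ^ a := by
  have hL : 0 < log q := log_pos hq
  set K' := max K 1
  have hK' : 0 < K' := zero_lt_one.trans_le (le_max_right K 1)
  filter_upwards [tendsto_natCast_atTop_atTop.eventually
    ((isLittleO_log_rpow_atTop ha).bound (div_pos hL (mul_pos two_pos hK'))),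
    eventually_ge_atTop 1] with n hlog hn m h
  have hlogn : 0 ≤ log n := log_nonneg (by exact_mod_cast hn)
  rw [norm_of_nonneg hlogn, norm_of_nonneg (by positivity)] at hlog
  refine le_of_mul_le_mul_right ?_ hL
  calc K * m * log q ≤ K' * (m * log q) := by
        rw [mul_assoc]
        gcongr
        exact le_max_left K 1
    _ ≤ K' * (2 * log n) := by
        refine mul_le_mul_of_nonneg_left (h.upper.trans ?_) hK'.le
        exact mul_le_mul_of_nonneg_right (by linarith) hlogn
    _ ≤ K' * (2 * (log q / (2 * K') * n ^ a)) := by gcongr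
    _ = n ^ a * log q := by field_simp

lemma eventually_mul_le_sq_div_pow_of_inLogRange (hq : 1 < q) (hε : 0 < ε) (K : ℝ) :
    ∀ᶠ n : ℕ in atTop, ∀ m, InLogRange q ε n m → K * m ≤ (n : ℝ) ^ 2 / q ^ m := by
  filter_upwards [eventually_mul_le_rpow_of_inLogRange hq hε.le hε K, eventually_ge_atTop 1]
    with n hK hn m h
  exact (hK m h).trans (h.rpow_le_sq_div_pow (one_pos.trans hq) hn)

lemma eventually_mul_sq_div_pow_le_of_inLogRange (hq : 1 < q) (hε : 0 < ε) (K : ℝ) :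
    ∀ᶠ n : ℕ in atTop, ∀ m, InLogRange q ε n m → K * ((n : ℝ) ^ 2 / q ^ m) ≤ n := by
  filter_upwards [((tendsto_rpow_atTop hε).comp tendsto_natCast_atTop_atTop).eventually_ge_atTop K,
    eventually_ge_atTop 1] with n hK hn m h
  rw [mul_comm]
  exact (mul_le_mul_of_nonneg_left hK (by positivity)).trans
    (h.sq_div_pow_mul_rpow_le (one_pos.trans hq) hn)

lemma one_le_of_le_powSum (hm : 1 ≤ m) (hx : 0 ≤ x) (h : m ≤ powSum m x) : 1 ≤ x :=
  (powSum_strictMonoOn hm).le_iff_le (Set.mem_Ici.2 zero_le_one) hx |>.1 (by simpa [powSum] using h)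

lemma InLogRange.mul_exp_inv_le (h : InLogRange q ε n m) (hq : 1 < q) (hε : 0 < ε)
    (hε1 : ε ≤ 1) (hm : 1 ≤ m) (hmε : 4 / (ε * log q) ≤ m)
    (hx : 0 < x) (hxn : powSum m x = n) : x * exp (1 / m) ≤ q ^ (-(ε / 8)) * q := by
  have hq0 : 0 < q := one_pos.trans hq
  have hL : 0 < log q := log_pos hq
  have hm0 : (0 : ℝ) < m := by exact_mod_cast hm
  have log_x : m * log x ≤ log n := by
    rw [← log_pow]
    exact log_le_log (by positivity) (hxn ▸ pow_le_powSum hm hx.le)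
  have log_n : log n ≤ (1 - ε / 2) * (m * log q) := by
    have := mul_nonneg (mul_nonneg hε.le (by linarith : 0 ≤ 1 - ε)) (log_natCast_nonneg n)
    calc log n ≤ (1 - ε / 2) * ((1 + ε) * log n) := by linarith
      _ ≤ (1 - ε / 2) * (m * log q) := mul_le_mul_of_nonneg_left h.lower (by linarith)
  have inv_m : 1 / (m : ℝ) ≤ ε / 4 * log q := by
    rw [div_le_iff₀ (by positivity)] at hmε
    rw [div_le_iff₀ hm0]
    linarith
  rw [← log_le_log_iff (by positivity) (by positivity), log_mul hx.ne' (exp_pos _).ne', log_exp,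
    log_mul (by positivity) hq0.ne', log_rpow hq0]
  have : log x ≤ (1 - ε / 2) * log q := le_of_mul_le_mul_left (by linarith) hm0
  have := mul_pos hε hL
  linarith

lemma InLogRange.sqrt_le (h : InLogRange q ε n m) (hq : 1 < q) (hε : 0 ≤ ε)
    (hm : 1 ≤ m) (hmn : (m : ℝ) ≤ n ^ (ε / 4))
    (hx : 1 ≤ x) (hxn : powSum m x = n) : √q ≤ q ^ (-(ε / 8)) * x := by
  have hq0 : 0 < q := one_pos.trans hq
  have hx0 : 0 < x := one_pos.trans_le hx
  have hm0 : (0 : ℝ) < m := by exact_mod_cast hm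
  have hn0 : (0 : ℝ) < n := hxn ▸ (pow_pos hx0 m).trans_le (pow_le_powSum hm hx0.le)
  have log_m : log m ≤ ε / 4 * log n := by
    rw [← log_rpow hn0]
    exact log_le_log hm0 hmn
  have log_n : log n ≤ log m + m * log x := by
    rw [← log_pow, ← log_mul hm0.ne' (by positivity)]
    exact log_le_log hn0 (hxn ▸ powSum_le_mul_pow m hx)
  rw [← log_le_log_iff (by positivity) (by positivity), log_sqrt hq0.le,
    log_mul (by positivity) hx0.ne', log_rpow hq0]
  suffices m * ((1 / 2 + ε / 8) * log q) ≤ m * log x by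
    linarith [le_of_mul_le_mul_left this hm0]
  calc m * ((1 / 2 + ε / 8) * log q) = (1 / 2 + ε / 8) * (m * log q) := by ring
    _ ≤ (1 / 2 + ε / 8) * ((2 - ε) * log n) := mul_le_mul_of_nonneg_left h.upper (by positivity)
    _ ≤ (1 - ε / 4) * log n := by
        have := mul_nonneg (mul_nonneg hε hε) (log_natCast_nonneg n)
        linarith
    _ ≤ m * log x := by linarith

/-- The saddle point lies between powers of `q` with exponents in the interior of `(1 / 2, 1)`. -/
lemma eventually_saddlePoint_bounds (hq : 1 < q) (hε : 0 < ε) (hε1 : ε ≤ 1) :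
    ∀ᶠ n : ℕ in atTop, ∀ m, InLogRange q ε n m → ∀ x, 0 < x → powSum m x = n →
      x * exp (1 / m) ≤ q ^ (-(ε / 8)) * q ∧ √q ≤ q ^ (-(ε / 8)) * x := by
  filter_upwards [eventually_le_of_inLogRange hq hε.le 1,
    eventually_le_of_inLogRange hq hε.le (4 / (ε * log q)),
    eventually_mul_le_rpow_of_inLogRange hq hε.le (by positivity : 0 < ε / 4) 1,
    eventually_ge_atTop 1] with n hm hmε hmn hn m h x hx hxn
  specialize hmn m h
  have hm : 1 ≤ m := by exact_mod_cast hm m h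
  rw [one_mul] at hmn
  have hmn' : (m : ℝ) ≤ n := hmn.trans (rpow_le_self_of_one_le (by exact_mod_cast hn) (by linarith))
  exact ⟨h.mul_exp_inv_le hq hε hε1 hm (hmε m h) hx hxn, h.sqrt_le hq hε.le hm hmn
    (one_le_of_le_powSum hm hx.le (hxn ▸ hmn')) hxn⟩

variable (F : Type) [Field F] [Fintype F]

variable {F} in
lemma polyProb_div_permProb_le_of_saddlePoint (hm : 1 ≤ m) (hx : 4 / 3 ≤ x)
    (hxq : x < Fintype.card F) (hxn : powSum m x = n)
    (hmM : 2048 * m ≤ (n : ℝ) ^ 2 / (Fintype.card F : ℝ) ^ m)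
    (hMn : (n : ℝ) ^ 2 / (Fintype.card F : ℝ) ^ m ≤ n) :
    polyProb F n m / permProb n m ≤ Gq F m x *
      exp (-(1 / 2 ^ 18) * n ^ 3 / (m * (Fintype.card F : ℝ) ^ (2 * m))) := by
  set M := (n : ℝ) ^ 2 / (Fintype.card F : ℝ) ^ m with hM
  have hx0 : 0 ≤ x := by linarith
  have hm0 : (1 : ℝ) ≤ m := by exact_mod_cast hm
  have floor_le := Nat.floor_le (by positivity : 0 ≤ M / 1024)
  have lt_floor := Nat.lt_floor_add_one (M / 1024)
  refine (polyProb_div_permProb_le (t := ⌊M / 1024⌋₊) hm hx0 hxq hxn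
    (hxn ▸ powSum_le_four_mul_pow m hx) (Nat.le_floor (by push_cast; linarith))
    (by rify; linarith) (by linarith)).trans ?_
  refine mul_le_mul_of_nonneg_left (exp_le_exp.2 ?_) (Gq_pos hx0 hxq).le
  calc -(n * ⌊M / 1024⌋₊ / (128 * (m * (Fintype.card F : ℝ) ^ m)))
      ≤ -(n * (M / 2048) / (128 * (m * (Fintype.card F : ℝ) ^ m))) := by
        gcongr
        linarith
    _ = _ := by
        rw [hM]
        field_simp
        ring

theorem eventually_polyProb_div_permProb_le (hε : 0 < ε) (hε1 : ε ≤ 1) :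
    ∀ᶠ n : ℕ in atTop, ∀ m, InLogRange (Fintype.card F) ε n m → ∀ x, 0 < x → powSum m x = n →
      polyProb F n m / permProb n m ≤ Gq F m x *
        exp (-(1 / 2 ^ 18) * n ^ 3 / (m * (Fintype.card F : ℝ) ^ (2 * m))) := by
  have hq2 : (2 : ℝ) ≤ Fintype.card F := by exact_mod_cast Fintype.one_lt_card (α := F)
  have hq : (1 : ℝ) < Fintype.card F := one_lt_two.trans_le hq2
  have tau_lt : (Fintype.card F : ℝ) ^ (-(ε / 8)) < 1 :=
    rpow_lt_one_of_one_lt_of_neg hq (by linarith)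
  filter_upwards [eventually_saddlePoint_bounds hq hε hε1,
    eventually_le_of_inLogRange hq hε.le 1,
    eventually_mul_le_sq_div_pow_of_inLogRange hq hε 2048,
    eventually_mul_sq_div_pow_le_of_inLogRange hq hε 1] with n hsaddle hm hmM hMn m h x hx hxn
  obtain ⟨hxq, hqx⟩ := hsaddle m h x hx hxn
  refine polyProb_div_permProb_le_of_saddlePoint (by exact_mod_cast hm m h) ?_ ?_ hxn (hmM m h)
    (by linarith [hMn m h])
  · calc 4 / 3 ≤ √(Fintype.card F) := le_sqrt_of_sq_le (by linarith)
      _ ≤ x := hqx.trans (mul_le_of_le_one_left hx.le tau_lt.le)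
  · calc x ≤ x * exp (1 / m) := le_mul_of_one_le_right hx.le (one_le_exp (by positivity))
      _ < Fintype.card F := hxq.trans_lt (mul_lt_of_lt_one_left (by positivity) tau_lt)

lemma mul_exp_inv_pow_le (hm : 1 ≤ m) (hx : 0 ≤ x) (hxn : powSum m x = n) :
    (x * exp (1 / m)) ^ (2 * m) ≤ exp 2 * n ^ 2 := by
  have hm0 : (m : ℝ) ≠ 0 := by exact_mod_cast Nat.one_le_iff_ne_zero.1 hm
  rw [mul_pow, mul_comm 2 m, pow_mul, ← exp_nat_mul, mul_comm]
  push_cast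
  rw [show (m : ℝ) * 2 * (1 / m) = 2 by field_simp]
  gcongr
  exact hxn ▸ pow_le_powSum hm hx

variable {F} in
lemma mul_Gq_mul_exp_neg_le_of_saddlePoint {τ B δ : ℝ} (hm : 1 ≤ m) (hn : 1 ≤ n) (hx : 0 < x)
    (hxn : powSum m x = n) (hτ : 0 ≤ τ) (hτ1 : τ < 1)
    (hxq : x * exp (1 / m) ≤ τ * Fintype.card F) (hqx : √(Fintype.card F) ≤ τ * x)
    (hB : B = 4 / (1 - τ) * exp 2) (hBn : 4 * B * (n ^ 2 / (Fintype.card F : ℝ) ^ m) ≤ n)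
    (hδ : exp (-(1 / m * (B * (n ^ 2 / (Fintype.card F : ℝ) ^ m)))) ≤ δ) :
    (1 - δ) * Gq F m x *
        exp (-(16 * B ^ 2) * n ^ 3 / (m * (Fintype.card F : ℝ) ^ (2 * m)))
      ≤ polyProb F n m / permProb n m := by
  set M := (n : ℝ) ^ 2 / (Fintype.card F : ℝ) ^ m with hM
  have hBM : 0 ≤ 2 * (B * M) := by
    rw [hB]
    positivity
  have x_le : x ≤ x * exp (1 / m) := le_mul_of_one_le_right hx.le (one_le_exp (by positivity))
  have y_lt : x * exp (1 / m) < Fintype.card F :=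
    hxq.trans_lt (mul_lt_of_lt_one_left (by positivity) hτ1)
  have tsum_le : ∑' j, gqLogCoeff F m j * (x * exp (1 / m)) ^ j ≤ B * M :=
    calc ∑' j, gqLogCoeff F m j * (x * exp (1 / m)) ^ j
        ≤ 4 / (1 - τ) * ((x * exp (1 / m)) ^ (2 * m) / (Fintype.card F : ℝ) ^ m) :=
          tsum_gqLogCoeff_mul_pow_le (by positivity) hτ hτ1 hxq (hqx.trans (by gcongr))
      _ ≤ 4 / (1 - τ) * (exp 2 * n ^ 2 / (Fintype.card F : ℝ) ^ m) := by
          gcongr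
          exact mul_exp_inv_pow_le hm hx.le hxn
      _ = B * M := by rw [hB, hM]; ring
  have floor_le := Nat.floor_le hBM
  refine le_trans ?_ (mul_Gq_mul_exp_neg_le_polyProb_div_permProb (K := ⌊2 * (B * M)⌋₊) hm hn hx.le
    hxn (by positivity) y_lt tsum_le (Nat.lt_floor_add_one _).le (by rify; linarith))
  have hG := Gq_pos (m := m) hx.le (x_le.trans_lt y_lt)
  have exp_le : exp (-(1 / m * (B * M))) ≤ 1 := exp_le_one_iff.2 (by
    rw [neg_nonpos]
    exact mul_nonneg (by positivity) (by linarith))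
  have := sub_nonneg.2 exp_le
  gcongr
  calc -(16 * B ^ 2) * n ^ 3 / (m * (Fintype.card F : ℝ) ^ (2 * m))
      = -(4 * (2 * (B * M)) ^ 2 / (n * m)) := by
        rw [hM]
        field_simp
        ring
    _ ≤ _ := by gcongr

theorem exists_eventually_le_polyProb_div_permProb (hε : 0 < ε) (hε1 : ε ≤ 1) :
    ∃ C > 0, ∀ δ > 0, ∀ᶠ n : ℕ in atTop, ∀ m, InLogRange (Fintype.card F) ε n m →
      ∀ x, 0 < x → powSum m x = n →
        (1 - δ) * Gq F m x * exp (-C * n ^ 3 / (m * (Fintype.card F : ℝ) ^ (2 * m)))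
          ≤ polyProb F n m / permProb n m := by
  have hq : (1 : ℝ) < Fintype.card F := by exact_mod_cast Fintype.one_lt_card (α := F)
  set τ := (Fintype.card F : ℝ) ^ (-(ε / 8))
  have hτ : 0 < τ := by positivity
  have hτ1 : τ < 1 := rpow_lt_one_of_one_lt_of_neg hq (by linarith)
  have hB : 1 ≤ 4 / (1 - τ) * exp 2 :=
    one_le_mul_of_one_le_of_one_le ((one_le_div (sub_pos.2 hτ1)).2 (by linarith))
      (one_le_exp two_pos.le)
  refine ⟨16 * (4 / (1 - τ) * exp 2) ^ 2, by positivity, fun δ hδ => ?_⟩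
  filter_upwards [eventually_saddlePoint_bounds hq hε hε1,
    eventually_le_of_inLogRange hq hε.le 1,
    eventually_mul_le_sq_div_pow_of_inLogRange hq hε (-log δ),
    eventually_mul_sq_div_pow_le_of_inLogRange hq hε (4 * (4 / (1 - τ) * exp 2)),
    eventually_ge_atTop 1] with n hsaddle hm hδM hBn hn m h x hx hxn
  obtain ⟨hxq, hqx⟩ := hsaddle m h x hx hxn
  have hm : 1 ≤ m := by exact_mod_cast hm m h
  refine mul_Gq_mul_exp_neg_le_of_saddlePoint hm hn hx hxn hτ.le hτ1 hxq hqx rfl (hBn m h) ?_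
  rw [← le_log_iff_exp_le hδ, neg_le, one_div_mul_eq_div,
    le_div_iff₀ (by positivity)]
  exact (hδM m h).trans (le_mul_of_one_le_left (by positivity) hB)

end Asymptotics

/-- Fix a prime power `q` (the cardinality of a finite field `F`) and
`ε ∈ (0,1/2)`. There exist `c, C > 0` such that for every `δ > 0` there is `N` with:
for all `n ≥ N` and all `m` with `(1+ε)·log_q n ≤ m ≤ (2−ε)·log_q n`, one has
`(1−δ)·G_q(x)·exp(−C·n³/(m·q^{2m})) ≤ p_{n,m,q}/p_{n,m} ≤ (1+δ)·G_q(x)·exp(−c·n³/(m·q^{2m}))`. -/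
theorem stmt12 :
    ∀ (F : Type) [Field F] [Fintype F], ∀ ε : ℝ, 0 < ε → ε < 1 / 2 →
      ∃ c C : ℝ, 0 < c ∧ 0 < C ∧ ∀ δ : ℝ, 0 < δ → ∃ N : ℕ, ∀ n : ℕ, N ≤ n → ∀ m : ℕ,
      (1 + ε) * Real.log n / Real.log (Fintype.card F) ≤ (m : ℝ) →
      (m : ℝ) ≤ (2 - ε) * Real.log n / Real.log (Fintype.card F) →
      ∀ x : ℝ, 0 < x → (∑ i ∈ Finset.Icc 1 m, x ^ i) = (n : ℝ) →
      (1 - δ) * Gq F m x *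
          Real.exp (-C * (n : ℝ) ^ 3 / ((m : ℝ) * (Fintype.card F : ℝ) ^ (2 * m))) ≤
        polyProb F n m / permProb n m ∧
      polyProb F n m / permProb n m ≤
        (1 + δ) * Gq F m x *
          Real.exp (-c * (n : ℝ) ^ 3 / ((m : ℝ) * (Fintype.card F : ℝ) ^ (2 * m))) := by
  intro F _ _ ε hε hε1
  have hL : 0 < log (Fintype.card F) := log_pos (by exact_mod_cast Fintype.one_lt_card (α := F))
  obtain ⟨C, hC, lower⟩ := exists_eventually_le_polyProb_div_permProb F hε (by linarith)
  have upper := eventually_polyProb_div_permProb_le F hε (by linarith)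
  refine ⟨1 / 2 ^ 18, C, by norm_num, hC, fun δ hδ => ?_⟩
  obtain ⟨N, bounds⟩ := Filter.eventually_atTop.1 ((lower δ hδ).and upper)
  refine ⟨N, fun n hn m hm_lower hm_upper x hx hxn => ?_⟩
  have hm : InLogRange (Fintype.card F) ε n m :=
    ⟨(div_le_iff₀ hL).1 hm_lower, (le_div_iff₀ hL).1 hm_upper⟩
  obtain ⟨lower, upper⟩ := bounds n hn
  have ratio_nonneg : 0 ≤ polyProb F n m / permProb n m := by
    unfold polyProb permProb
    positivity
  specialize upper m hm x hx hxn
  rw [mul_assoc (1 + δ)]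
  exact ⟨lower m hm x hx hxn,
    upper.trans (le_mul_of_one_le_left (ratio_nonneg.trans upper) (by linarith))⟩
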